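/- Let X be large and set λ = √(log X · log log X). Define the multiplicative function r supported on square-free integers by r(p) = λ/(√p · log p) for primes p with λ ≤ p ≤ exp((log λ)^2), and r(p) = 0 for all other primes. If log N > 3λ log log λ, then ∑_{m,n ≤ N, a,b ≤ X, an = bm} r(a)r(b) divided by ∑_{n ≤ X} r(n)^2 is at least N · exp((2+o(1)) √(log X / log log X)), where the o(1) is as X → ∞. -/

import Mathlib

open Finset Filter

/-!
Put `T = log X`, `λ = √(T log T)` and `V = T / λ = √(log X / log log X)`, and let
`D(X) = ∑_{n ≤ X} r(n)²` be the energy.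

*From the quadruple sum to divisor sums.* The equation `a n = b m` has at least
`⌊N gcd(a, b) / max(a, b)⌋` solutions with `m, n ≤ N`. Making a common factor `g` of `a` and `b` a
free variable costs a factor `∑_{d ∣ gcd(a, b)} 1 / d`, which is tiny because all primes involved
are at least `λ`. For fixed `g`, on dyadic blocks `max(a, b)` is comparable with `√(a b)`, so the
form is bounded below by a sum of squares. Cauchy-Schwarz in `g` then shows (`resonator_main`) that
the quotient in question is, up to factors `exp(o(V))`, at least
`N · (D(X)⁻¹ ∑_{n ≤ X} r(n)² W(n))²` with `W(n) = ∑_{a ∣ n, a ≤ N} 1 / (r(a) √a)`.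

*Pointwise size of the divisor sums.* Without the condition `a ≤ N`, and over the divisors of the
smooth part of `n`, the divisor sum is `∏ (1 + log p / λ)`, about the exponential of `1 / λ` times
the logarithm of the smooth part. Rankin's trick shows that `log N > 3 λ log log λ` makes the
condition `a ≤ N` harmless once the primes are restricted to `p ≤ exp(A log λ)`
(`divisor_sum_lower`).

*Where the energy lives.* The size of `λ` is such that `∑ r(p)² log p` over
`λ² < p ≤ exp(A log λ)` is close to `T`, while the primes beyond `exp(A log λ)` carry only a small
multiple of `T`; both follow from the Mertens estimate (`prime_sum_bounds`). Multiplying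
`m ≤ Y` by such primes shows that `D(Y)` is a proper fraction of `D(X)` if `Y` is somewhat smaller
than `X` (`energy_growth`), so a positive proportion of the energy sits on `n` with
`log n ≥ (1 - O(δ)) T`. On average over those `n` the large primes are negligible, so the smooth
part has logarithm `(1 - O(δ)) T`, and convexity of the exponential gives
`∑ r(n)² W(n) ≥ exp((1 - O(δ)) V) D(X)` (`resonator_energy`).

Hence for each fixed `δ` the bound holds with `2 - 10 δ` in the exponent once `X` is large
(`resNum_div_ge`), and a diagonal choice of `δ` tending to `0` produces the function `ε`.
-/

/-! ### The Mertens estimate and sums of `1 / (p log p)` -/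

/-- Legendre: `log n!` expanded over the primes `p ≤ n`; comparing it with Stirling yields both
halves of the Mertens estimate. -/
theorem log_factorial_eq (n : ℕ) :
    Real.log (n.factorial) =
      ∑ p ∈ (Icc 1 n).filter Nat.Prime, (n.factorial.factorization p : ℝ) * Real.log p := by
  have h := Nat.prod_factorization_pow_eq_self (Nat.factorial_ne_zero n)
  have h2 : n.factorial.factorization.support = (Icc 1 n).filter Nat.Prime := by
    ext p
    simp only [Nat.support_factorization, Nat.mem_primeFactors, mem_filter, mem_Icc]
    constructor
    · rintro ⟨hp, hd, -⟩
      exact ⟨⟨hp.one_lt.le, (hp.dvd_factorial).1 hd⟩, hp⟩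
    · rintro ⟨⟨_, hle⟩, hp⟩
      exact ⟨hp, (hp.dvd_factorial).2 hle, Nat.factorial_ne_zero n⟩
  conv_lhs => rw [← h]
  rw [Finsupp.prod, h2, Nat.cast_prod, Real.log_prod]
  · simp
  · intro p hp
    have := (mem_filter.1 hp).2.pos
    positivity

/-- Upper half of the Mertens estimate, from `v_p(n!) ≥ n / p - 1`, `n! ≤ n ^ n` and Chebyshev's
bound `θ(n) ≤ n log 4`. -/
theorem sum_log_div_le (n : ℕ) (hn : 1 ≤ n) :
    ∑ p ∈ (Icc 1 n).filter Nat.Prime, Real.log p / p ≤ Real.log n + Real.log 4 := by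
  have hn0 : (0 : ℝ) < n := by exact_mod_cast hn
  have h1 : Real.log (n.factorial) ≤ n * Real.log n := by
    rw [← Real.log_pow]
    apply Real.log_le_log (by exact_mod_cast n.factorial_pos)
    exact_mod_cast n.factorial_le_pow
  have h2 : ∑ p ∈ (Icc 1 n).filter Nat.Prime, ((n : ℝ) / p - 1) * Real.log p
      ≤ Real.log (n.factorial) := by
    rw [log_factorial_eq]
    refine sum_le_sum fun p hp => ?_
    obtain ⟨hp1, hp⟩ := mem_filter.1 hp
    refine mul_le_mul_of_nonneg_right ?_ (Real.log_nonneg (by exact_mod_cast hp.one_lt.le))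
    have h3 : n / p ≤ n.factorial.factorization p := by
      rw [Nat.factorization_factorial hp (Nat.lt_succ_self _)]
      have hmem : 1 ∈ Ico 1 (Nat.log p n).succ := by
        simp only [mem_Ico, le_refl, true_and]
        have := Nat.log_pos hp.one_lt (mem_Icc.1 hp1).2
        omega
      have := single_le_sum (f := fun i => n / p ^ i) (fun i _ => Nat.zero_le _) hmem
      simpa using this
    have h4 : ((n / p : ℕ) : ℝ) ≤ (n.factorial.factorization p : ℝ) := by exact_mod_cast h3
    have h5 := Nat.lt_floor_add_one ((n : ℝ) / p)
    rw [Nat.floor_div_eq_div] at h5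
    linarith
  have h3 : ∑ p ∈ (Icc 1 n).filter Nat.Prime, Real.log p ≤ Real.log 4 * n := by
    have := Chebyshev.theta_le_log4_mul_x hn0.le
    rw [Chebyshev.theta_eq_sum_Icc, Nat.floor_natCast] at this
    refine le_trans (le_of_eq ?_) this
    apply sum_congr _ (fun _ _ => rfl)
    ext p
    simp only [mem_filter, mem_Icc]
    constructor
    · rintro ⟨⟨_, a⟩, b⟩; exact ⟨⟨Nat.zero_le _, a⟩, b⟩
    · rintro ⟨⟨_, a⟩, b⟩; exact ⟨⟨b.one_lt.le, a⟩, b⟩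
  have h4 : ∑ p ∈ (Icc 1 n).filter Nat.Prime, ((n : ℝ) / p - 1) * Real.log p
      = n * ∑ p ∈ (Icc 1 n).filter Nat.Prime, Real.log p / p
        - ∑ p ∈ (Icc 1 n).filter Nat.Prime, Real.log p := by
    rw [mul_sum, ← sum_sub_distrib]
    exact sum_congr rfl fun p _ => by ring
  rw [h4] at h2
  have : n * ∑ p ∈ (Icc 1 n).filter Nat.Prime, Real.log p / p
      ≤ n * (Real.log n + Real.log 4) := by linarith
  exact le_of_mul_le_mul_left this hn0

/-- The prime powers contribute a bounded amount to `log n! / n`. The sum is dominated by the one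
over all integers `m ≥ 2`, which telescopes against `5 / √m`. -/
theorem sum_log_div_mul_pred_le (n : ℕ) :
    ∑ p ∈ (Icc 1 n).filter Nat.Prime, Real.log p / (p * (p - 1)) ≤ 5 := by
  have key : ∀ n : ℕ, 1 ≤ n →
      ∑ m ∈ Icc 2 n, Real.log m / (m * (m - 1)) ≤ 5 - 5 / Real.sqrt n := by
    intro n hn
    induction n, hn using Nat.le_induction with
    | base => norm_num
    | succ n hn ih =>
      rw [sum_Icc_succ_top (by omega)]
      have hn0 : (1 : ℝ) ≤ n := by exact_mod_cast hn
      set s := Real.sqrt n with hs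
      set t := Real.sqrt ((n + 1 : ℕ) : ℝ) with ht
      have hs2 : s ^ 2 = n := Real.sq_sqrt (by linarith)
      have ht2 : t ^ 2 = n + 1 := by rw [ht, Real.sq_sqrt (by positivity)]; push_cast; ring
      have hs1 : 1 ≤ s := Real.one_le_sqrt.2 hn0
      have hst : s ≤ t := Real.sqrt_le_sqrt (by push_cast; linarith)
      have hlog : Real.log ((n + 1 : ℕ) : ℝ) ≤ 2 * t := by
        have h := Real.log_le_sub_one_of_pos (x := t) (by linarith)
        have h' : Real.log ((n + 1 : ℕ) : ℝ) = 2 * Real.log t := by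
          rw [ht, Real.log_sqrt (by positivity)]; ring
        rw [h']; linarith
      have e : (((n + 1 : ℕ) : ℝ) * (((n + 1 : ℕ) : ℝ) - 1)) = t ^ 2 * s ^ 2 := by
        rw [ht2, hs2]; push_cast; ring
      rw [e]
      have h1 : Real.log ((n + 1 : ℕ) : ℝ) / (t ^ 2 * s ^ 2) ≤ 2 * t / (t ^ 2 * s ^ 2) := by
        gcongr
      have h2 : 2 * t / (t ^ 2 * s ^ 2) ≤ 5 / s - 5 / t := by
        have h3 : (t - s) * (t + s) = 1 := by ring_nf; rw [ht2, hs2]; ring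
        have h4 : t ≤ 3 / 2 * s := by
          refine (sq_le_sq₀ (by linarith) (by linarith)).1 ?_
          nlinarith
        have h5 : 2 ≤ 5 * s * (t - s) := by nlinarith
        have t0 : 0 < t := by linarith
        have s0 : 0 < s := by linarith
        have h6 : 2 * t / (t ^ 2 * s ^ 2) = 2 / (t * s ^ 2) := by
          rw [div_eq_div_iff (by positivity) (by positivity)]; ring
        have h7 : 5 / s - 5 / t = 5 * s * (t - s) / (t * s ^ 2) := by
          rw [div_sub_div _ _ s0.ne' t0.ne', div_eq_div_iff (by positivity) (by positivity)]; ring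
        rw [h6, h7]
        gcongr
      linarith
  rcases Nat.eq_zero_or_pos n with rfl | hn
  · simp
  · refine le_trans ?_ (le_trans (key n hn) (by linarith [show 0 ≤ 5 / Real.sqrt n by positivity]))
    refine sum_le_sum_of_subset_of_nonneg ?_ ?_
    · intro p hp
      obtain ⟨hp1, hp⟩ := mem_filter.1 hp
      exact mem_Icc.2 ⟨hp.two_le, (mem_Icc.1 hp1).2⟩
    · intro m hm _
      have : (2 : ℝ) ≤ m := by exact_mod_cast (mem_Icc.1 hm).1
      exact div_nonneg (Real.log_nonneg (by linarith)) (by nlinarith)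

/-- Lower half of the Mertens estimate, from `v_p(n!) ≤ n / (p - 1)` and the Stirling lower bound. -/
theorem le_sum_log_div (n : ℕ) (hn : 1 ≤ n) :
    Real.log n - 6 ≤ ∑ p ∈ (Icc 1 n).filter Nat.Prime, Real.log p / p := by
  have hn0 : (0 : ℝ) < n := by exact_mod_cast hn
  have h1 : n * Real.log n - n ≤ Real.log (n.factorial) := by
    have h := Stirling.le_log_factorial_stirling (show n ≠ 0 by omega)
    have h' : 0 ≤ Real.log (2 * Real.pi) := Real.log_nonneg (by linarith [Real.pi_gt_three])
    have h'' : 0 ≤ Real.log n := Real.log_nonneg (by exact_mod_cast hn)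
    linarith
  have h2 : Real.log (n.factorial)
      ≤ ∑ p ∈ (Icc 1 n).filter Nat.Prime, n * (Real.log p / p + Real.log p / (p * (p - 1))) := by
    rw [log_factorial_eq]
    refine sum_le_sum fun p hp => ?_
    obtain ⟨hp1, hp⟩ := mem_filter.1 hp
    have hl : 0 ≤ Real.log p := (Real.log_nonneg (by exact_mod_cast hp.one_lt.le))
    have := Fact.mk hp
    have h := sub_one_mul_padicValNat_factorial (p := p) n
    rw [← Nat.factorization_def _ hp] at h
    have h' : (p - 1) * n.factorial.factorization p ≤ n := by omega
    have h2 : ((p : ℝ) - 1) * n.factorial.factorization p ≤ n := by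
      have : (((p - 1 : ℕ) : ℝ)) * n.factorial.factorization p ≤ n := by exact_mod_cast h'
      rwa [Nat.cast_sub hp.one_lt.le, Nat.cast_one] at this
    have hp2 : (2 : ℝ) ≤ p := by exact_mod_cast hp.two_le
    have hp3 : (0 : ℝ) < p - 1 := by linarith
    have e : n * (Real.log p / p + Real.log p / (p * (p - 1))) = n / (p - 1) * Real.log p := by
      field_simp
      ring
    rw [e]
    refine mul_le_mul_of_nonneg_right ?_ hl
    rw [le_div_iff₀ hp3]; linarith
  rw [← mul_sum, sum_add_distrib] at h2
  have h3 := sum_log_div_mul_pred_le n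
  have : n * (Real.log n - 1) ≤ n * (∑ p ∈ (Icc 1 n).filter Nat.Prime, Real.log p / p + 5) := by
    nlinarith
  have := le_of_mul_le_mul_left this hn0
  linarith

/-- The sum of `log q / q` over the primes `q ≤ n`, the sum estimated by
Mertens. -/
noncomputable def mertensSum (n : ℕ) : ℝ := ∑ p ∈ (Icc 1 n).filter Nat.Prime, Real.log p / p

theorem abs_mertensSum_sub_log_le (n : ℕ) (hn : 1 ≤ n) : |mertensSum n - Real.log n| ≤ 6 := by
  have h1 := sum_log_div_le n hn
  have h2 := le_sum_log_div n hn
  have : Real.log 4 ≤ 6 := by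
    have := Real.log_le_sub_one_of_pos (x := 4) (by norm_num)
    linarith
  rw [mertensSum, abs_le]
  constructor <;> linarith

/-- `∑ 1 / (p log p)` over the primes `m < p ≤ k` is `1 / log m - 1 / log k`, up to
`O(1 / (log m) ^ 2)`: partial summation applied to the Mertens estimate, with explicit constants. -/
theorem prime_sum_bounds (m k : ℕ) (hm : 3 ≤ m) (hmk : m ≤ k) :
    ∑ p ∈ (Ioc m k).filter Nat.Prime, 1 / (p * Real.log p)
      ≤ 1 / Real.log m - 1 / Real.log k + 12 / Real.log m ^ 2 ∧
    (1 - 1 / Real.log m) * (1 / Real.log m - 1 / Real.log k) - 12 / Real.log m ^ 2 ≤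
    ∑ p ∈ (Ioc m k).filter Nat.Prime, 1 / (p * Real.log p) := by
  have hlogpos : ∀ n : ℕ, m ≤ n → 0 < Real.log n := fun n hn =>
    Real.log_pos (by exact_mod_cast (show 1 < n by omega))
  -- Summation by parts is carried out by induction on `k`. The boundary term
  -- `(M(k) - log k) / (log k) ^ 2` is kept exactly, and its variation costs at most `6` times the
  -- decrease of `1 / (log k) ^ 2`, which telescopes.
  have key : ∑ p ∈ (Ioc m k).filter Nat.Prime, 1 / (p * Real.log p)
      ≤ 1 / Real.log m - 1 / Real.log k + (mertensSum k - Real.log k) / Real.log k ^ 2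
        + 6 * (2 / Real.log m ^ 2 - 1 / Real.log k ^ 2) ∧
    (1 - 1 / Real.log m) * (1 / Real.log m - 1 / Real.log k)
        + (mertensSum k - Real.log k) / Real.log k ^ 2
        - 6 * (2 / Real.log m ^ 2 - 1 / Real.log k ^ 2)
      ≤ ∑ p ∈ (Ioc m k).filter Nat.Prime, 1 / (p * Real.log p) := by
    induction k, hmk using Nat.le_induction with
    | base =>
      have h := abs_le.1 (abs_mertensSum_sub_log_le m (by omega))
      have hu := hlogpos m le_rfl
      have e : ∀ c : ℝ, c / Real.log m ^ 2 = c * (1 / Real.log m ^ 2) := fun c => by ring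
      have : 0 < 1 / Real.log m ^ 2 := by positivity
      rw [e (mertensSum m - _), e 2]
      simp only [Ioc_self, filter_empty, sum_empty, sub_self, mul_zero, zero_add]
      constructor <;> nlinarith
    | succ n hn ih =>
      have hu := hlogpos n hn
      have hv := hlogpos (n + 1) (by omega)
      have h := abs_le.1 (abs_mertensSum_sub_log_le n (by omega))
      have huv : Real.log n ≤ Real.log (n + 1 : ℕ) := by
        apply Real.log_le_log (by exact_mod_cast (show 0 < n by omega))
        push_cast; linarith
      have hmu : Real.log m ≤ Real.log n := by
        apply Real.log_le_log (by exact_mod_cast (show 0 < m by omega))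
        exact_mod_cast hn
      have hm0 := hlogpos m le_rfl
      have huv1 : Real.log (n + 1 : ℕ) ≤ Real.log n + 1 := by
        have hn1 : (1 : ℝ) ≤ n := by exact_mod_cast (show 1 ≤ n by omega)
        have := Real.log_le_sub_one_of_pos (x := ((n + 1 : ℕ) : ℝ) / n) (by positivity)
        rw [Real.log_div (by positivity) (by positivity)] at this
        have h2 : ((n + 1 : ℕ) : ℝ) / n ≤ 2 := by
          rw [div_le_iff₀ (by linarith)]; push_cast; linarith
        linarith
      have hstep : ∑ p ∈ (Ioc m (n + 1)).filter Nat.Prime, 1 / (p * Real.log p)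
          = ∑ p ∈ (Ioc m n).filter Nat.Prime, 1 / (p * Real.log p)
            + (mertensSum (n + 1) - mertensSum n) / Real.log (n + 1 : ℕ) ^ 2 := by
        rw [mertensSum, mertensSum]
        simp only [sum_filter]
        rw [sum_Ioc_succ_top (by omega), sum_Icc_succ_top (by omega)]
        congr 1
        rw [add_sub_cancel_left]
        split_ifs
        · field_simp
        · simp
      rw [hstep]
      set u := Real.log n
      set v := Real.log (n + 1 : ℕ)
      set w := Real.log m
      set S := mertensSum n
      set S' := mertensSum (n + 1)
      set Q := ∑ p ∈ (Ioc m n).filter Nat.Prime, 1 / (p * Real.log p)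
      have hF : 1 / v ^ 2 ≤ 1 / u ^ 2 := by gcongr
      have hG : (v - u) / v ^ 2 ≤ 1 / u - 1 / v := by
        have e : 1 / u - 1 / v = (v - u) / (u * v) := by field_simp
        rw [e]
        gcongr
        nlinarith
      have hG' : (1 - 1 / w) * (1 / u - 1 / v) ≤ (v - u) / v ^ 2 := by
        have e : (v - u) / v ^ 2 = (u / v) * (1 / u - 1 / v) := by field_simp
        rw [e]
        have h1 : 0 ≤ 1 / u - 1 / v := by
          have : 1 / v ≤ 1 / u := by gcongr
          linarith
        apply mul_le_mul_of_nonneg_right _ h1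
        have h2 : 1 / v ≤ 1 / w := by gcongr; linarith
        have h3 : (v - 1) / v ≤ u / v := by gcongr; linarith
        have h4 : (v - 1) / v = 1 - 1 / v := by field_simp
        linarith
      have e1 : (S' - S) / v ^ 2 = (v - u) / v ^ 2 + (S' - v) / v ^ 2 - (S - u) * (1 / v ^ 2) := by
        ring
      have e2 : (S - u) / u ^ 2 = (S - u) * (1 / u ^ 2) := by ring
      rw [e1]
      rw [e2] at ih
      obtain ⟨ih1, ih2⟩ := ih
      have a1 : 0 ≤ (6 - (S - u)) * (1 / u ^ 2 - 1 / v ^ 2) :=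
        mul_nonneg (by linarith) (by linarith)
      have a2 : 0 ≤ (6 + (S - u)) * (1 / u ^ 2 - 1 / v ^ 2) :=
        mul_nonneg (by linarith) (by linarith)
      constructor <;> nlinarith
  have h := abs_le.1 (abs_mertensSum_sub_log_le k (by omega))
  have hv := hlogpos k hmk
  have e : (mertensSum k - Real.log k) / Real.log k ^ 2
      = (mertensSum k - Real.log k) * (1 / Real.log k ^ 2) := by ring
  have e2 : 12 / Real.log m ^ 2 = 6 * (2 / Real.log m ^ 2) := by ring
  have hp : 0 < 1 / Real.log k ^ 2 := by positivity
  rw [e] at key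
  rw [e2]
  constructor <;> nlinarith [key.1, key.2]

/-! ### Reduction of the quadruple sum to divisor sums -/

/-- A nonnegative multiplicative function supported on the squarefree integers. -/
structure IsResonator (r : ℕ → ℝ) : Prop where
  map_one : r 1 = 1
  map_mul : ∀ m n : ℕ, Nat.Coprime m n → r (m * n) = r m * r n
  map_not_squarefree : ∀ n : ℕ, ¬ Squarefree n → r n = 0
  nonneg : ∀ n, 0 ≤ r n

/-- The numerator `∑ r(a) r(b)` over `m, n ≤ N` and `a, b ≤ X` with `a n = b m`. -/
noncomputable def resNum (r : ℕ → ℝ) (N X : ℕ) : ℝ :=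
  ∑ m ∈ Icc 1 N, ∑ n ∈ Icc 1 N, ∑ a ∈ Icc 1 X, ∑ b ∈ Icc 1 X,
    if a * n = b * m then r a * r b else 0

/-- The number of pairs `(m, n)` with `m, n ≤ N` and `a n = b m`. -/
def solCount (N a b : ℕ) : ℕ := #{q ∈ Icc 1 N ×ˢ Icc 1 N | a * q.2 = b * q.1}

theorem resNum_eq (r : ℕ → ℝ) (N X : ℕ) :
    resNum r N X = ∑ a ∈ Icc 1 X, ∑ b ∈ Icc 1 X, r a * r b * solCount N a b := by
  have h : resNum r N X = ∑ q ∈ Icc 1 N ×ˢ Icc 1 N, ∑ a ∈ Icc 1 X, ∑ b ∈ Icc 1 X,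
      if a * q.2 = b * q.1 then r a * r b else 0 := by
    rw [resNum, sum_product]
  rw [h, sum_comm]
  refine sum_congr rfl fun a _ => ?_
  rw [sum_comm]
  refine sum_congr rfl fun b _ => ?_
  rw [← sum_filter, sum_const, solCount, nsmul_eq_mul, mul_comm]

/-- With `G = gcd(a, b)` the solutions of `a n = b m` are the multiples of `(a / G, b / G)`, so there
are `⌊N / (max(a, b) / G)⌋` of them. -/
theorem le_solCount (N a b : ℕ) (ha : 1 ≤ a) (hb : 1 ≤ b) :
    N / (max a b / Nat.gcd a b) ≤ solCount N a b := by
  set G := Nat.gcd a b with hG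
  have hGpos : 0 < G := Nat.gcd_pos_of_pos_left _ ha
  obtain ⟨a', ha'⟩ : G ∣ a := Nat.gcd_dvd_left a b
  obtain ⟨b', hb'⟩ : G ∣ b := Nat.gcd_dvd_right a b
  have ha0 : 0 < a' := by rcases Nat.eq_zero_or_pos a' with h | h; (subst h; omega); exact h
  have hb0 : 0 < b' := by rcases Nat.eq_zero_or_pos b' with h | h; (subst h; omega); exact h
  have hmax : max a b / G = max a' b' := by
    rw [ha', hb', Nat.mul_max_mul_left, Nat.mul_div_cancel_left _ hGpos]
  rw [hmax]
  have : N / max a' b' = #(Icc 1 (N / max a' b')) := by simp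
  rw [this, solCount]
  refine card_le_card_of_injOn (fun k => (a' * k, b' * k)) ?_ ?_
  · intro k hk
    obtain ⟨hk1, hk2⟩ := mem_Icc.1 (mem_coe.1 hk)
    have h1 : max a' b' * k ≤ N := by
      rw [mul_comm]; exact (Nat.le_div_iff_mul_le (by omega)).1 hk2
    have h2 : a' * k ≤ N := (Nat.mul_le_mul_right k (le_max_left a' b')).trans h1
    have h3 : b' * k ≤ N := (Nat.mul_le_mul_right k (le_max_right a' b')).trans h1
    simp only [coe_filter, mem_product, mem_Icc, Set.mem_ofPred_eq]
    refine ⟨⟨⟨Nat.mul_pos ha0 hk1, h2⟩, ⟨Nat.mul_pos hb0 hk1, h3⟩⟩, ?_⟩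
    conv_lhs => rw [ha']
    conv_rhs => rw [hb']
    ring
  · intro k _ l _ hkl
    exact Nat.eq_of_mul_eq_mul_left ha0 (Prod.ext_iff.1 hkl).1

/-- Counting solutions with the common factor `g` of `a` and `b` singled out overcounts by at most
`∑_{d ∣ gcd(a, b)} 1 / d`, since passing from `G = gcd(a, b)` to `g = G / d` divides the count
by `d`. -/
theorem sum_divisors_gcd_le (N a b : ℕ) (ha : 1 ≤ a) (hb : 1 ≤ b) :
    ∑ g ∈ (Nat.gcd a b).divisors, ((N / (max a b / g) : ℕ) : ℝ)
      ≤ (∑ d ∈ (Nat.gcd a b).divisors, 1 / (d : ℝ)) * solCount N a b := by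
  set G := Nat.gcd a b with hG
  have hGpos : 0 < G := Nat.gcd_pos_of_pos_left _ ha
  have hGm : G ∣ max a b := by
    rcases max_choice a b with h | h <;> rw [h]
    exacts [Nat.gcd_dvd_left a b, Nat.gcd_dvd_right a b]
  rw [← Nat.sum_div_divisors, sum_mul]
  refine sum_le_sum fun d hd => ?_
  have hdG := Nat.dvd_of_mem_divisors hd
  have hd0 : 0 < d := Nat.pos_of_dvd_of_pos hdG hGpos
  have e : max a b / (G / d) = max a b / G * d := by
    obtain ⟨M, hM⟩ := hGm
    obtain ⟨c, hc⟩ := hdG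
    have hc0 : 0 < c := by rcases Nat.eq_zero_or_pos c with h | h; (subst h; omega); exact h
    rw [hM, Nat.mul_div_cancel_left _ hGpos, hc, Nat.mul_div_cancel_left _ hd0]
    rw [show d * c * M = c * (M * d) by ring, Nat.mul_div_cancel_left _ hc0]
  rw [e, ← Nat.div_div_eq_div_mul]
  refine (Nat.cast_div_le).trans ?_
  rw [div_eq_mul_one_div, mul_comm]
  gcongr
  exact le_solCount N a b ha hb

theorem sum_ite_dvd (X g : ℕ) (hg : 1 ≤ g) (f : ℕ → ℝ) :
    ∑ n ∈ Icc 1 X, (if g ∣ n then f n else 0) = ∑ k ∈ Icc 1 (X / g), f (g * k) := by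
  rw [← sum_filter]
  symm
  refine sum_bij (fun k _ => g * k) ?_ ?_ ?_ ?_
  · intro k hk
    obtain ⟨h1, h2⟩ := mem_Icc.1 hk
    have := (Nat.le_div_iff_mul_le hg).1 h2
    simp only [mem_filter, mem_Icc, dvd_mul_right, and_true]
    exact ⟨Nat.mul_pos hg h1, by linarith⟩
  · intro k _ l _ h
    exact Nat.eq_of_mul_eq_mul_left hg h
  · intro n hn
    obtain ⟨hn1, k, rfl⟩ := mem_filter.1 hn
    obtain ⟨h1, h2⟩ := mem_Icc.1 hn1
    refine ⟨k, mem_Icc.2 ⟨Nat.pos_of_mul_pos_left h1, (Nat.le_div_iff_mul_le hg).2 (by linarith)⟩, rfl⟩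
  · intros; rfl

theorem sum_divisors_eq (X n : ℕ) (hn : n ∈ Icc 1 X) (f : ℕ → ℝ) :
    ∑ g ∈ n.divisors, f g = ∑ g ∈ Icc 1 X, if g ∣ n then f g else 0 := by
  rw [← sum_filter]
  obtain ⟨h1, h2⟩ := mem_Icc.1 hn
  apply sum_congr _ fun _ _ => rfl
  ext g
  simp only [Nat.mem_divisors, mem_filter, mem_Icc]
  constructor
  · rintro ⟨h, -⟩
    exact ⟨⟨Nat.pos_of_dvd_of_pos h h1, (Nat.le_of_dvd h1 h).trans h2⟩, h⟩
  · rintro ⟨-, h⟩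
    exact ⟨h, by omega⟩

theorem sum_sum_divisors (X : ℕ) (f : ℕ → ℕ → ℝ) :
    ∑ g ∈ Icc 1 X, ∑ a ∈ Icc 1 (X / g), f g a
      = ∑ n ∈ Icc 1 X, ∑ a ∈ n.divisors, f (n / a) a := by
  have h1 : ∀ n ∈ Icc 1 X, ∑ a ∈ n.divisors, f (n / a) a
      = ∑ g ∈ Icc 1 X, if g ∣ n then f g (n / g) else 0 := by
    intro n hn
    rw [← sum_divisors_eq X n hn (fun g => f g (n / g)), ← Nat.sum_div_divisors]
    refine sum_congr rfl fun g hg => ?_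
    have h := Nat.dvd_of_mem_divisors hg
    rw [Nat.div_div_self h (by have := (mem_Icc.1 hn).1; omega)]
  rw [sum_congr rfl h1, sum_comm]
  refine sum_congr rfl fun g hg => ?_
  have hg1 := (mem_Icc.1 hg).1
  rw [sum_ite_dvd X g hg1]
  refine sum_congr rfl fun k _ => ?_
  rw [Nat.mul_div_cancel_left _ hg1]

/-- The common factor `g` of `a` and `b` becomes a free variable: the sum over triples `(g, a, b)`,
with no coprimality condition on `a, b`, is at most `C` times the numerator. This replaces Möbius
inversion, and all terms stay nonnegative. -/
theorem sum_le_resNum {r : ℕ → ℝ} (hr : IsResonator r) (N X : ℕ) (C : ℝ)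
    (hC : ∀ n ∈ Icc 1 X, r n ≠ 0 → ∑ d ∈ n.divisors, 1 / (d : ℝ) ≤ C) :
    ∑ g ∈ Icc 1 X, ∑ a ∈ Icc 1 (X / g), ∑ b ∈ Icc 1 (X / g),
      r (g * a) * r (g * b) * ((N / max a b : ℕ) : ℝ) ≤ C * resNum r N X := by
  rw [resNum_eq, mul_sum]
  have h1 : ∀ a ∈ Icc 1 X, ∑ b ∈ Icc 1 X, ∑ g ∈ Icc 1 X,
      (if g ∣ a then if g ∣ b then r a * r b * ((N / (max a b / g) : ℕ) : ℝ) else 0 else 0)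
      ≤ C * ∑ b ∈ Icc 1 X, r a * r b * solCount N a b := by
    intro a ha
    rw [mul_sum]
    refine sum_le_sum fun b hb => ?_
    have ha1 := (mem_Icc.1 ha).1
    have hb1 := (mem_Icc.1 hb).1
    by_cases hra : r a = 0
    · simp [hra]
    have e : ∑ g ∈ Icc 1 X,
        (if g ∣ a then if g ∣ b then r a * r b * ((N / (max a b / g) : ℕ) : ℝ) else 0 else 0)
        = r a * r b * ∑ g ∈ (Nat.gcd a b).divisors, ((N / (max a b / g) : ℕ) : ℝ) := by
      have hgm : Nat.gcd a b ∈ Icc 1 X := mem_Icc.2 ⟨Nat.gcd_pos_of_pos_left _ ha1,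
        (Nat.gcd_le_left _ ha1).trans (mem_Icc.1 ha).2⟩
      rw [sum_divisors_eq X _ hgm, mul_sum]
      refine sum_congr rfl fun g _ => ?_
      simp only [Nat.dvd_gcd_iff]
      split_ifs <;> simp_all
    rw [e]
    have h2 := sum_divisors_gcd_le N a b ha1 hb1
    have h3 : ∑ d ∈ (Nat.gcd a b).divisors, 1 / (d : ℝ) ≤ C := by
      refine le_trans ?_ (hC a ha hra)
      refine sum_le_sum_of_subset_of_nonneg
        (Nat.divisors_subset_of_dvd (by omega) (Nat.gcd_dvd_left a b)) fun d _ _ => by positivity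
    have h4 := mul_nonneg (hr.nonneg a) (hr.nonneg b)
    calc _ ≤ r a * r b * (C * solCount N a b) := by
          refine mul_le_mul_of_nonneg_left (h2.trans ?_) h4
          gcongr
      _ = _ := by ring
  refine le_trans (le_of_eq ?_) (sum_le_sum h1)
  have h5 : ∀ a ∈ Icc 1 X, ∑ b ∈ Icc 1 X, ∑ g ∈ Icc 1 X,
      (if g ∣ a then if g ∣ b then r a * r b * ((N / (max a b / g) : ℕ) : ℝ) else 0 else 0)
      = ∑ g ∈ Icc 1 X, if g ∣ a then ∑ b ∈ Icc 1 X,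
          if g ∣ b then r a * r b * ((N / (max a b / g) : ℕ) : ℝ) else 0 else 0 := by
    intro a _
    rw [sum_comm]
    refine sum_congr rfl fun g _ => ?_
    split_ifs <;> simp
  rw [sum_congr rfl h5, sum_comm]
  refine sum_congr rfl fun g hg => ?_
  have hg1 := (mem_Icc.1 hg).1
  rw [sum_ite_dvd X g hg1]
  refine sum_congr rfl fun a _ => ?_
  rw [sum_ite_dvd X g hg1]
  refine sum_congr rfl fun b _ => ?_
  rw [Nat.mul_max_mul_left, Nat.mul_div_cancel_left _ hg1]

/-- On a dyadic block `max a b` is comparable with `√(a b)`, so there the form with coefficients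
`⌊N / max a b⌋` dominates a rank-one form. Splitting into `J` dyadic blocks and applying
Cauchy-Schwarz costs the factor `4 J`. -/
theorem dyadic_lower (N J : ℕ) (S : Finset ℕ) (c : ℕ → ℝ) (hc : ∀ a, 0 ≤ c a)
    (hS : ∀ a ∈ S, 1 ≤ a ∧ a ≤ N ∧ Nat.log 2 a < J) :
    N * (∑ a ∈ S, c a / Real.sqrt a) ^ 2
      ≤ 4 * J * ∑ a ∈ S, ∑ b ∈ S, c a * c b * ((N / max a b : ℕ) : ℝ) := by
  have hmaps : ∀ a ∈ S, Nat.log 2 a ∈ range J := fun a ha => mem_range.2 (hS a ha).2.2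
  have h1 : (∑ a ∈ S, c a / Real.sqrt a) ^ 2
      ≤ J * ∑ j ∈ range J, (∑ a ∈ S with Nat.log 2 a = j, c a / Real.sqrt a) ^ 2 := by
    rw [← sum_fiberwise_of_maps_to hmaps]
    have := sq_sum_le_card_mul_sum_sq (s := range J)
      (f := fun j => ∑ a ∈ S with Nat.log 2 a = j, c a / Real.sqrt a)
    simpa using this
  have h2 : ∀ a ∈ S, ∀ b ∈ S, Nat.log 2 a = Nat.log 2 b →
      N * (c a / Real.sqrt a * (c b / Real.sqrt b))
        ≤ 4 * (c a * c b * ((N / max a b : ℕ) : ℝ)) := by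
    intro a ha b hb hab
    obtain ⟨ha1, haN, -⟩ := hS a ha
    obtain ⟨hb1, hbN, -⟩ := hS b hb
    have ha2 : a < 2 * b := by
      have h := Nat.lt_pow_succ_log_self (b := 2) (by norm_num) a
      have h' := Nat.pow_log_le_self 2 (x := b) (by omega)
      rw [hab, pow_succ] at h
      omega
    have hb2 : b < 2 * a := by
      have h := Nat.lt_pow_succ_log_self (b := 2) (by norm_num) b
      have h' := Nat.pow_log_le_self 2 (x := a) (by omega)
      rw [← hab, pow_succ] at h
      omega
    have ha0 : (0 : ℝ) < a := by exact_mod_cast ha1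
    have hb0 : (0 : ℝ) < b := by exact_mod_cast hb1
    set M := max a b with hM
    have hM0 : 1 ≤ M := le_max_of_le_left ha1
    have hMN : M ≤ N := max_le haN hbN
    have hMr : (0 : ℝ) < M := by exact_mod_cast hM0
    have hdiv : (N : ℝ) / M ≤ 2 * ((N / M : ℕ) : ℝ) := by
      have h5 := Nat.lt_floor_add_one ((N : ℝ) / M)
      rw [Nat.floor_div_eq_div] at h5
      have : (1 : ℝ) ≤ ((N / M : ℕ) : ℝ) := by exact_mod_cast Nat.div_pos hMN hM0
      linarith
    have hsq : (M : ℝ) ≤ 2 * (Real.sqrt a * Real.sqrt b) := by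
      rw [← Real.sqrt_mul ha0.le]
      have : (M : ℝ) / 2 ≤ Real.sqrt (a * b) := by
        apply Real.le_sqrt_of_sq_le
        have ha2' : (a : ℝ) < 2 * b := by exact_mod_cast ha2
        have hb2' : (b : ℝ) < 2 * a := by exact_mod_cast hb2
        rcases max_choice a b with h | h
        · rw [hM, h]; nlinarith
        · rw [hM, h]; nlinarith
      linarith
    have hs : 0 < Real.sqrt a * Real.sqrt b := by positivity
    have h3 : (N : ℝ) / (Real.sqrt a * Real.sqrt b) ≤ 4 * ((N / M : ℕ) : ℝ) := by
      rw [div_le_iff₀ hs]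
      rw [div_le_iff₀ hMr] at hdiv
      have : (0 : ℝ) ≤ ((N / M : ℕ) : ℝ) := by positivity
      nlinarith
    calc N * (c a / Real.sqrt a * (c b / Real.sqrt b))
        = c a * c b * (N / (Real.sqrt a * Real.sqrt b)) := by field_simp
      _ ≤ c a * c b * (4 * ((N / M : ℕ) : ℝ)) := by
          gcongr
          exact mul_nonneg (hc a) (hc b)
      _ = _ := by ring
  have hnn : ∀ a b, 0 ≤ c a * c b * ((N / max a b : ℕ) : ℝ) := fun a b =>
    mul_nonneg (mul_nonneg (hc a) (hc b)) (by positivity)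
  have h3 : ∑ j ∈ range J, N * (∑ a ∈ S with Nat.log 2 a = j, c a / Real.sqrt a) ^ 2
      ≤ 4 * ∑ a ∈ S, ∑ b ∈ S, c a * c b * ((N / max a b : ℕ) : ℝ) := by
    have : ∑ a ∈ S, ∑ b ∈ S, c a * c b * ((N / max a b : ℕ) : ℝ)
        = ∑ j ∈ range J, ∑ a ∈ S with Nat.log 2 a = j, ∑ b ∈ S,
          c a * c b * ((N / max a b : ℕ) : ℝ) := by
      rw [sum_fiberwise_of_maps_to hmaps]
    rw [this, mul_sum]
    refine sum_le_sum fun j _ => ?_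
    rw [sq, sum_mul_sum, mul_sum, mul_sum]
    refine sum_le_sum fun a ha => ?_
    have hle : ∑ b ∈ S with Nat.log 2 b = j, c a * c b * ((N / max a b : ℕ) : ℝ)
        ≤ ∑ b ∈ S, c a * c b * ((N / max a b : ℕ) : ℝ) :=
      sum_le_sum_of_subset_of_nonneg (filter_subset _ _) fun b _ _ => hnn a b
    refine le_trans ?_ (mul_le_mul_of_nonneg_left hle (by norm_num))
    rw [mul_sum, mul_sum]
    refine sum_le_sum fun b hb => ?_
    obtain ⟨ha1, ha2⟩ := mem_filter.1 ha
    obtain ⟨hb1, hb2⟩ := mem_filter.1 hb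
    exact h2 a ha1 b hb1 (ha2.trans hb2.symm)
  rw [← mul_sum] at h3
  have hJ : (0 : ℝ) ≤ J := by positivity
  have hN : (0 : ℝ) ≤ N := by positivity
  nlinarith [mul_le_mul_of_nonneg_left h1 hN, mul_le_mul_of_nonneg_left h3 hJ]

/-- The numerator is bounded below by the square of the `r(n)²`-weighted sum of the divisor sums
`W(n) = ∑_{a ∣ n, a ≤ N} 1 / (r(a) √a)`. Writing `n = g a`, one has `r(n)² / r(a) = r(g) r(g a)`,
and Cauchy-Schwarz in `g` separates `∑ r(g)²` from the form treated by `dyadic_lower`. -/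
theorem resonator_main {r : ℕ → ℝ} (hr : IsResonator r) (N X J : ℕ) (C : ℝ)
    (hJ : ∀ a ∈ Icc 1 X, Nat.log 2 a < J)
    (hC : ∀ n ∈ Icc 1 X, r n ≠ 0 → ∑ d ∈ n.divisors, 1 / (d : ℝ) ≤ C) :
    N * (∑ n ∈ Icc 1 X, r n ^ 2 * ∑ a ∈ n.divisors with a ≤ N, 1 / (r a * Real.sqrt a)) ^ 2
      ≤ 4 * J * C * resNum r N X * ∑ n ∈ Icc 1 X, r n ^ 2 := by
  set V : ℕ → ℝ := fun g => ∑ a ∈ Icc 1 (X / g) with a ≤ N, r (g * a) / Real.sqrt a with hV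
  have h1 : ∑ n ∈ Icc 1 X, r n ^ 2 * ∑ a ∈ n.divisors with a ≤ N, 1 / (r a * Real.sqrt a)
      = ∑ g ∈ Icc 1 X, r g * V g := by
    have : ∀ g, r g * V g = ∑ a ∈ Icc 1 (X / g),
        if a ≤ N then r g * (r (g * a) / Real.sqrt a) else 0 := fun g => by
      rw [hV, mul_sum, sum_filter]
    simp_rw [this]
    rw [sum_sum_divisors X (fun g a => if a ≤ N then r g * (r (g * a) / Real.sqrt a) else 0)]
    refine sum_congr rfl fun n hn => ?_
    rw [mul_sum, sum_filter]
    refine sum_congr rfl fun a ha => ?_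
    split_ifs with haN
    · have had := Nat.dvd_of_mem_divisors ha
      rw [Nat.div_mul_cancel had]
      by_cases hrn : r n = 0
      · simp [hrn]
      have hsq : Squarefree n := by
        by_contra h
        exact hrn (hr.map_not_squarefree n h)
      have e : r n = r (n / a) * r a := by
        rw [← hr.map_mul, Nat.div_mul_cancel had]
        have := hsq
        rw [← Nat.div_mul_cancel had] at this
        exact Nat.coprime_of_squarefree_mul this
      have hra : r a ≠ 0 := fun h => hrn (by rw [e, h, mul_zero])
      have : r (n / a) = r n / r a := by rw [e]; field_simp
      rw [this]
      field_simp
    · rfl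
  have h2 : (∑ g ∈ Icc 1 X, r g * V g) ^ 2
      ≤ (∑ g ∈ Icc 1 X, r g ^ 2) * ∑ g ∈ Icc 1 X, V g ^ 2 := sum_mul_sq_le_sq_mul_sq _ _ _
  have h3 : ∑ g ∈ Icc 1 X, N * V g ^ 2 ≤ 4 * J * (C * resNum r N X) := by
    refine le_trans ?_ (mul_le_mul_of_nonneg_left (sum_le_resNum hr N X C hC) (by positivity))
    rw [mul_sum]
    refine sum_le_sum fun g hg => ?_
    refine (dyadic_lower N J _ (fun a => r (g * a)) (fun a => hr.nonneg _) ?_).trans ?_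
    · intro a ha
      obtain ⟨ha1, ha2⟩ := mem_filter.1 ha
      obtain ⟨ha3, ha4⟩ := mem_Icc.1 ha1
      exact ⟨ha3, ha2, hJ a (mem_Icc.2 ⟨ha3, ha4.trans (Nat.div_le_self _ _)⟩)⟩
    · have hnn : ∀ a b, 0 ≤ r (g * a) * r (g * b) * ((N / max a b : ℕ) : ℝ) := fun a b =>
        mul_nonneg (mul_nonneg (hr.nonneg _) (hr.nonneg _)) (by positivity)
      refine mul_le_mul_of_nonneg_left ?_ (by positivity)
      refine (sum_le_sum fun a _ => sum_le_sum_of_subset_of_nonneg (filter_subset _ _)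
        fun b _ _ => hnn a b).trans ?_
      exact sum_le_sum_of_subset_of_nonneg (filter_subset _ _)
        fun a _ _ => sum_nonneg fun b _ => hnn a b
  rw [← mul_sum] at h3
  have hD : 0 ≤ ∑ n ∈ Icc 1 X, r n ^ 2 := sum_nonneg fun _ _ => sq_nonneg _
  rw [h1]
  have hN : (0 : ℝ) ≤ N := by positivity
  nlinarith [mul_le_mul_of_nonneg_left h2 hN, mul_le_mul_of_nonneg_left h3 hD]

/-! ### Divisor sums and energy of a resonator -/

theorem isResonator_of_prime {r : ℕ → ℝ} (h1 : r 1 = 1)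
    (hmul : ∀ m n : ℕ, Nat.Coprime m n → r (m * n) = r m * r n)
    (hsq : ∀ n : ℕ, ¬ Squarefree n → r n = 0) (hp : ∀ p : ℕ, p.Prime → 0 ≤ r p) :
    IsResonator r := by
  refine ⟨h1, hmul, hsq, fun n => ?_⟩
  induction n using induction_on_primes with
  | zero => rw [hsq 0 (by simp)]
  | one => rw [h1]; norm_num
  | prime_mul p a hpp ih =>
    by_cases hd : p ∣ a
    · rw [hsq]
      intro h
      exact hpp.not_isUnit (h p (Nat.mul_dvd_mul_left p hd))
    · rw [hmul _ _ ((hpp.coprime_iff_not_dvd).2 hd)]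
      exact mul_nonneg (hp p hpp) ih

namespace IsResonator

variable {r : ℕ → ℝ}

theorem squarefree (hr : IsResonator r) {n : ℕ} (hn : r n ≠ 0) : Squarefree n := by
  by_contra h
  exact hn (hr.map_not_squarefree n h)

theorem ne_zero_of_dvd (hr : IsResonator r) {n d : ℕ} (hn : r n ≠ 0) (hd : d ∣ n) : r d ≠ 0 := by
  obtain ⟨k, rfl⟩ := hd
  rw [hr.map_mul _ _ (Nat.coprime_of_squarefree_mul (hr.squarefree hn))] at hn
  exact left_ne_zero_of_mul hn

theorem prime_mul_sq_le (hr : IsResonator r) {p : ℕ} (hp : p.Prime) (k : ℕ) :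
    r (p * k) ^ 2 ≤ r p ^ 2 * r k ^ 2 := by
  by_cases hd : p ∣ k
  · rw [hr.map_not_squarefree]
    · rw [zero_pow two_ne_zero]
      positivity
    · intro h
      exact hp.not_isUnit (h p (Nat.mul_dvd_mul_left p hd))
  · rw [hr.map_mul _ _ ((hp.coprime_iff_not_dvd).2 hd), mul_pow]

/-- The multiplicative function `a ↦ a ^ σ / (r(a) √a)`, where division by `r(a) = 0` gives `0`. -/
noncomputable def twist (_hr : IsResonator r) (σ : ℝ) : ArithmeticFunction ℝ :=
  ⟨fun a => (a : ℝ) ^ σ / (r a * Real.sqrt a), by simp⟩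

theorem twist_apply (hr : IsResonator r) (σ : ℝ) (a : ℕ) :
    hr.twist σ a = (a : ℝ) ^ σ / (r a * Real.sqrt a) := rfl

theorem twist_isMultiplicative (hr : IsResonator r) (σ : ℝ) : (hr.twist σ).IsMultiplicative := by
  refine ⟨by simp [twist_apply, hr.map_one], fun {m n} h => ?_⟩
  simp only [twist_apply]
  rw [hr.map_mul m n h, Nat.cast_mul, Real.mul_rpow (by positivity) (by positivity),
    Real.sqrt_mul (by positivity)]
  rw [div_mul_div_comm]
  ring

end IsResonator

theorem sum_log_primeFactors_le (n : ℕ) (hn : 1 ≤ n) :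
    ∑ p ∈ n.primeFactors, Real.log p ≤ Real.log n := by
  rw [← Real.log_prod (fun p hp => by
    have := (Nat.prime_of_mem_primeFactors hp).pos
    positivity), ← Nat.cast_prod]
  apply Real.log_le_log
  · exact_mod_cast Finset.prod_pos fun p hp => (Nat.prime_of_mem_primeFactors hp).pos
  · exact_mod_cast Nat.le_of_dvd hn (Nat.prod_primeFactors_dvd n)

/-- If all prime factors of `n` are at least `lam`, each factor `1 + 1 / p` of `∑_{d ∣ n} 1 / d` is at
most `exp(log p / (lam log lam))`. -/
theorem sum_inv_divisors_le {n : ℕ} (hn : Squarefree n) {lam : ℝ} (hlam : 1 < lam)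
    (h : ∀ p ∈ n.primeFactors, lam ≤ (p : ℝ)) :
    ∑ d ∈ n.divisors, 1 / (d : ℝ) ≤ Real.exp (Real.log n / (lam * Real.log lam)) := by
  set f : ArithmeticFunction ℝ := ⟨fun d => 1 / (d : ℝ), by simp⟩ with hf
  have hfa : ∀ d, f d = 1 / (d : ℝ) := fun _ => rfl
  have hm : f.IsMultiplicative := by
    refine ⟨by simp [hfa], fun {m n} _ => ?_⟩
    simp [hfa, mul_comm]
  have hL : 0 < Real.log lam := Real.log_pos hlam
  have e := hm.prodPrimeFactors_one_add_of_squarefree hn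
  simp only [hfa] at e
  rw [← e]
  calc ∏ p ∈ n.primeFactors, (1 + 1 / (p : ℝ))
      ≤ ∏ p ∈ n.primeFactors, Real.exp (Real.log p / (lam * Real.log lam)) := by
        refine prod_le_prod (fun p _ => by positivity) fun p hp => ?_
        have h1 := h p hp
        have h2 : 1 / (p : ℝ) ≤ 1 / lam := by gcongr
        have h3 : Real.log lam ≤ Real.log p := Real.log_le_log (by linarith) h1
        have h4 : 1 / lam ≤ Real.log p / (lam * Real.log lam) := by
          rw [div_le_div_iff₀ (by linarith) (by positivity)]
          nlinarith
        have := Real.add_one_le_exp (Real.log p / (lam * Real.log lam))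
        linarith
    _ = Real.exp ((∑ p ∈ n.primeFactors, Real.log p) / (lam * Real.log lam)) := by
        rw [← Real.exp_sum, sum_div]
    _ ≤ _ := by
        gcongr
        exact sum_log_primeFactors_le n (Nat.pos_of_ne_zero hn.ne_zero)

/-- `∑ log p` over the primes `p ≤ Z` dividing `n`: for squarefree `n`, the logarithm of the
`Z`-smooth part of `n`. -/
noncomputable def smoothLog (Z n : ℕ) : ℝ := ∑ p ∈ n.primeFactors with p ≤ Z, Real.log p

theorem one_add_ge_exp {x δ : ℝ} (hx : 0 ≤ x) (hxd : x ≤ δ) :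
    Real.exp ((1 - δ) * x) ≤ 1 + x := by
  have h1 : (1 - δ) * x ≤ x / (1 + x) := by
    rw [le_div_iff₀ (by linarith)]
    nlinarith [mul_nonneg hx hx, mul_nonneg (mul_nonneg hx hx) hx, mul_nonneg hx (sub_nonneg.2 hxd)]
  have h2 := Real.add_one_le_exp (-(x / (1 + x)))
  have h3 : -(x / (1 + x)) + 1 = 1 / (1 + x) := by field_simp; ring
  rw [h3, Real.exp_neg] at h2
  have h4 := one_div_le_one_div_of_le (by positivity) h2
  simp only [one_div, inv_inv] at h4
  exact (Real.exp_le_exp.2 h1).trans h4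

/-- Lower bound for the divisor sum at a single `n`. Restricted to the divisors of the `Z`-smooth part
of `n` but not to `a ≤ N`, it is `∏ (1 + log p / lam)`, whose logarithm is almost
`smoothLog Z n / lam`; the divisors `a > N` contribute at most `1 / 2`. -/
theorem divisor_sum_lower {r : ℕ → ℝ} (hr : IsResonator r) {lam δ σ N : ℝ} {Z n : ℕ}
    (hlam : 0 < lam) (hσ : 0 ≤ σ) (hn : r n ≠ 0)
    (hp : ∀ p ∈ n.primeFactors, r p = lam / (Real.sqrt p * Real.log p))
    (hZ : ∀ p ∈ n.primeFactors, p ≤ Z → (p : ℝ) ^ σ ≤ Real.exp 1 ∧ Real.log p / lam ≤ δ)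
    (hN : 0 < N) (hT : N ^ (-σ) * Real.exp (Real.exp 1 * (Real.log n / lam)) ≤ 1 / 2) :
    1 / 2 * Real.exp ((1 - δ) * (smoothLog Z n / lam))
      ≤ ∑ a ∈ n.divisors with a ≤ ⌊N⌋₊, 1 / (r a * Real.sqrt a) := by
  have hsq := hr.squarefree hn
  have hn1 : 1 ≤ n := Nat.pos_of_ne_zero hsq.ne_zero
  set P := n.primeFactors.filter (· ≤ Z) with hP
  have hPprime : ∀ p ∈ P, p.Prime := fun p h => Nat.prime_of_mem_primeFactors (mem_filter.1 h).1
  set n' := ∏ p ∈ P, p with hn'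
  have hdvd : n' ∣ n := (prod_dvd_prod_of_subset _ _ _ (filter_subset _ _)).trans
    (Nat.prod_primeFactors_dvd n)
  have hsq' : Squarefree n' := hsq.squarefree_of_dvd hdvd
  have hPf : n'.primeFactors = P := Nat.primeFactors_prod hPprime
  have hnn : ∀ a : ℕ, 0 ≤ 1 / (r a * Real.sqrt a) := fun a =>
    div_nonneg zero_le_one (mul_nonneg (hr.nonneg a) (Real.sqrt_nonneg _))
  have htw : ∀ s : ℝ, ∏ p ∈ P, (1 + Real.log p / lam * (p : ℝ) ^ s)
      = ∑ a ∈ n'.divisors, (a : ℝ) ^ s / (r a * Real.sqrt a) := by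
    intro s
    have e := (hr.twist_isMultiplicative s).prodPrimeFactors_one_add_of_squarefree hsq'
    simp only [hr.twist_apply] at e
    rw [← e, hPf]
    refine prod_congr rfl fun p h => ?_
    have hpp := hPprime p h
    have hp0 : (0 : ℝ) < p := by exact_mod_cast hpp.pos
    have hlog : 0 < Real.log p := Real.log_pos (by exact_mod_cast hpp.one_lt)
    rw [hp p (mem_filter.1 h).1]
    have : 0 < Real.sqrt p := by positivity
    field_simp
  have h0 := htw 0
  simp only [Real.rpow_zero, mul_one] at h0
  -- Rankin's trick: `1 ≤ (a / N) ^ σ` for `a > N`.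
  have htail : ∑ a ∈ n'.divisors with ¬ a ≤ ⌊N⌋₊, 1 / (r a * Real.sqrt a) ≤ 1 / 2 := by
    calc _ ≤ ∑ a ∈ n'.divisors, N ^ (-σ) * ((a : ℝ) ^ σ / (r a * Real.sqrt a)) := by
          refine (sum_le_sum fun a ha => ?_).trans (sum_le_sum_of_subset_of_nonneg
            (filter_subset _ _) fun a _ _ => ?_)
          · have h1 : N < a := (Nat.floor_lt hN.le).1 (not_le.1 (mem_filter.1 ha).2)
            have h2 : 1 ≤ N ^ (-σ) * (a : ℝ) ^ σ := by
              rw [Real.rpow_neg hN.le, ← div_eq_inv_mul, le_div_iff₀ (by positivity), one_mul]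
              exact Real.rpow_le_rpow hN.le h1.le hσ
            calc _ ≤ (N ^ (-σ) * (a : ℝ) ^ σ) * (1 / (r a * Real.sqrt a)) :=
                  le_mul_of_one_le_left (hnn a) h2
              _ = _ := by ring
          · have := hnn a
            rw [div_eq_mul_one_div]
            positivity
      _ = N ^ (-σ) * ∏ p ∈ P, (1 + Real.log p / lam * (p : ℝ) ^ σ) := by
          rw [htw, mul_sum]
      _ ≤ N ^ (-σ) * Real.exp (Real.exp 1 * (Real.log n / lam)) := by
          gcongr
          calc _ ≤ ∏ p ∈ P, Real.exp (Real.exp 1 * (Real.log p / lam)) := by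
                refine prod_le_prod (fun p h => ?_) fun p h => ?_
                · have : 0 ≤ Real.log p := Real.log_natCast_nonneg p
                  positivity
                · have h1 := (hZ p (mem_filter.1 h).1 (mem_filter.1 h).2).1
                  have h2 : 0 ≤ Real.log p / lam := div_nonneg (Real.log_natCast_nonneg p) hlam.le
                  have h3 := Real.add_one_le_exp (Real.exp 1 * (Real.log p / lam))
                  nlinarith
            _ = Real.exp (Real.exp 1 * ((∑ p ∈ P, Real.log p) / lam)) := by
                rw [← Real.exp_sum, ← mul_sum, sum_div]
            _ ≤ _ := by
                gcongr
                refine le_trans ?_ (sum_log_primeFactors_le n hn1)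
                exact sum_le_sum_of_subset_of_nonneg (filter_subset _ _)
                  fun p _ _ => Real.log_natCast_nonneg p
      _ ≤ 1 / 2 := hT
  have hsplit := sum_filter_add_sum_filter_not n'.divisors (fun a => a ≤ ⌊N⌋₊)
    (fun a : ℕ => 1 / (r a * Real.sqrt a))
  have hmono : ∑ a ∈ n'.divisors with a ≤ ⌊N⌋₊, 1 / (r a * Real.sqrt a)
      ≤ ∑ a ∈ n.divisors with a ≤ ⌊N⌋₊, 1 / (r a * Real.sqrt a) :=
    sum_le_sum_of_subset_of_nonneg
      (filter_subset_filter _ (Nat.divisors_subset_of_dvd (by omega) hdvd)) fun a _ _ => hnn a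
  have hxnn : ∀ p : ℕ, 0 ≤ Real.log p / lam := fun p =>
    div_nonneg (Real.log_natCast_nonneg p) hlam.le
  have hone : (1 : ℝ) ≤ ∏ p ∈ P, (1 + Real.log p / lam) :=
    Finset.one_le_prod fun p _ => by linarith [hxnn p]
  have hexp : Real.exp ((1 - δ) * (smoothLog Z n / lam)) ≤ ∏ p ∈ P, (1 + Real.log p / lam) := by
    rw [smoothLog, sum_div, mul_sum, Real.exp_sum]
    refine prod_le_prod (fun p _ => (Real.exp_pos _).le) fun p h => ?_
    exact one_add_ge_exp (hxnn p) (hZ p (mem_filter.1 h).1 (mem_filter.1 h).2).2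
  rw [h0] at hone hexp
  linarith

/-- Interchange of summation, writing `n = p k` for each prime `p` dividing `n`. -/
theorem sum_sq_mul_sum_primeFactors (r : ℕ → ℝ) (X : ℕ) (Q : ℕ → Prop) [DecidablePred Q]
    (w : ℕ → ℝ) :
    ∑ n ∈ Icc 1 X, r n ^ 2 * ∑ p ∈ n.primeFactors with Q p, w p
      = ∑ p ∈ Icc 1 X with p.Prime ∧ Q p, w p * ∑ k ∈ Icc 1 (X / p), r (p * k) ^ 2 := by
  have h1 : ∀ n ∈ Icc 1 X, r n ^ 2 * ∑ p ∈ n.primeFactors with Q p, w p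
      = ∑ p ∈ Icc 1 X, if p ∣ n then (if p.Prime ∧ Q p then w p * r n ^ 2 else 0) else 0 := by
    intro n hn
    rw [mul_sum, ← sum_divisors_eq X n hn (fun p => if p.Prime ∧ Q p then w p * r n ^ 2 else 0),
      ← sum_filter]
    have : n.primeFactors.filter Q = n.divisors.filter (fun p => p.Prime ∧ Q p) := by
      ext p
      simp only [mem_filter, Nat.mem_primeFactors, Nat.mem_divisors]
      tauto
    rw [this]
    exact sum_congr rfl fun p _ => mul_comm _ _
  rw [sum_congr rfl h1, sum_comm, sum_filter]
  refine sum_congr rfl fun p hp => ?_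
  rw [sum_ite_dvd X p (mem_Icc.1 hp).1]
  split_ifs
  · rw [mul_sum]
  · simp

/-- In the mean with weights `r(n)²`, the primes satisfying `Q` contribute to `log n` at most
`∑ r(p)² log p`, because `r(p k)² ≤ r(p)² r(k)²`. -/
theorem sum_large_primes_le {r : ℕ → ℝ} (hr : IsResonator r) (X : ℕ) (Q : ℕ → Prop)
    [DecidablePred Q] :
    ∑ n ∈ Icc 1 X, r n ^ 2 * ∑ p ∈ n.primeFactors with Q p, Real.log p
      ≤ (∑ p ∈ Icc 1 X with p.Prime ∧ Q p, r p ^ 2 * Real.log p) * ∑ n ∈ Icc 1 X, r n ^ 2 := by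
  rw [sum_sq_mul_sum_primeFactors, sum_mul]
  refine sum_le_sum fun p hp => ?_
  have hpp := (mem_filter.1 hp).2.1
  have hl := Real.log_natCast_nonneg p
  calc _ ≤ Real.log p * ∑ k ∈ Icc 1 X, r p ^ 2 * r k ^ 2 := by
        gcongr
        refine (sum_le_sum fun k _ => hr.prime_mul_sq_le hpp k).trans ?_
        refine sum_le_sum_of_subset_of_nonneg (Icc_subset_Icc_right (Nat.div_le_self _ _)) ?_
        intros; positivity
    _ = _ := by rw [← mul_sum]; ring

/-- Growth of the energy `D(Y) = ∑_{m ≤ Y} r(m)²`. Multiplying each `m ≤ Y` by primes `q ≤ Z` prime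
to `m` produces integers `n = q m ≤ Y Z`, each weighted by at most `∑_{q ∣ n} log q ≤ log (Y Z)`.
Thus if the available `q` carry `∑ r(q)² log q ≥ B > log (Y Z)`, then `D(Y)` is a proper fraction
of `D(X)`. -/
theorem energy_growth {r : ℕ → ℝ} (hr : IsResonator r) (Y Z X : ℕ) (hYZ : Y * Z ≤ X)
    (hX : 1 ≤ Y * Z) (Q : ℕ → Prop) [DecidablePred Q] (B : ℝ)
    (hB : ∀ m ∈ Icc 1 Y, r m ≠ 0 →
      B ≤ ∑ q ∈ Icc 1 Z with (q.Prime ∧ Q q) ∧ ¬ q ∣ m, r q ^ 2 * Real.log q) :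
    B * ∑ m ∈ Icc 1 Y, r m ^ 2 ≤ Real.log (Y * Z : ℕ) * ∑ n ∈ Icc 1 X, r n ^ 2 := by
  have h1 : ∑ n ∈ Icc 1 (Y * Z), r n ^ 2 * ∑ p ∈ n.primeFactors with (Q p ∧ p ≤ Z), Real.log p
      ≤ Real.log (Y * Z : ℕ) * ∑ n ∈ Icc 1 X, r n ^ 2 := by
    calc _ ≤ ∑ n ∈ Icc 1 (Y * Z), r n ^ 2 * Real.log (Y * Z : ℕ) := by
          refine sum_le_sum fun n hn => ?_
          obtain ⟨hn1, hn2⟩ := mem_Icc.1 hn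
          gcongr
          calc _ ≤ ∑ p ∈ n.primeFactors, Real.log p :=
                sum_le_sum_of_subset_of_nonneg (filter_subset _ _)
                  fun p _ _ => Real.log_natCast_nonneg p
            _ ≤ Real.log n := sum_log_primeFactors_le n hn1
            _ ≤ _ := Real.log_le_log (by exact_mod_cast hn1) (by exact_mod_cast hn2)
      _ ≤ _ := by
          rw [← sum_mul, mul_comm]
          refine mul_le_mul_of_nonneg_left ?_ (Real.log_natCast_nonneg _)
          exact sum_le_sum_of_subset_of_nonneg (Icc_subset_Icc_right hYZ)
            fun _ _ _ => sq_nonneg _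
  refine le_trans ?_ h1
  rw [sum_sq_mul_sum_primeFactors]
  have h2 : B * ∑ m ∈ Icc 1 Y, r m ^ 2 ≤ ∑ m ∈ Icc 1 Y,
      ∑ q ∈ Icc 1 Z with (q.Prime ∧ Q q), if q ∣ m then 0 else r q ^ 2 * Real.log q * r m ^ 2 := by
    rw [mul_sum]
    refine sum_le_sum fun m hm => ?_
    by_cases hrm : r m = 0
    · simp [hrm]
    refine (mul_le_mul_of_nonneg_right (hB m hm hrm) (sq_nonneg _)).trans (le_of_eq ?_)
    rw [sum_mul, ← filter_filter, sum_filter]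
    refine sum_congr rfl fun q _ => ?_
    split_ifs <;> simp_all
  refine h2.trans ?_
  rw [sum_comm]
  refine (sum_le_sum (g := fun q : ℕ => Real.log q * ∑ k ∈ Icc 1 (Y * Z / q), r (q * k) ^ 2)
    fun q hq => ?_).trans ?_
  · obtain ⟨hq1, hqp, hQ⟩ := mem_filter.1 hq
    have hsub : Icc 1 Y ⊆ Icc 1 (Y * Z / q) := by
      apply Icc_subset_Icc_right
      rw [Nat.le_div_iff_mul_le hqp.pos]
      exact Nat.mul_le_mul_left _ (mem_Icc.1 hq1).2
    rw [mul_sum]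
    have hl := Real.log_natCast_nonneg q
    refine (sum_le_sum fun m _ => ?_).trans (sum_le_sum_of_subset_of_nonneg hsub ?_)
    · split_ifs with hd
      · positivity
      · rw [hr.map_mul _ _ ((hqp.coprime_iff_not_dvd).2 hd)]
        exact le_of_eq (by ring)
    · intros; positivity
  · refine sum_le_sum_of_subset_of_nonneg ?_ ?_
    · intro q hq
      obtain ⟨hq1, hqp, hQ⟩ := mem_filter.1 hq
      obtain ⟨h3, h4⟩ := mem_Icc.1 hq1
      have hY : 1 ≤ Y := by
        rcases Nat.eq_zero_or_pos Y with h | h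
        · subst h; simp at hX
        · exact h
      refine mem_filter.2 ⟨mem_Icc.2 ⟨h3, h4.trans (Nat.le_mul_of_pos_left _ hY)⟩, hqp, hQ, h4⟩
    · intro q _ _
      have hl := Real.log_natCast_nonneg q
      positivity

/-! ### Energy carried by ranges of primes -/

/-- The inequalities between `T = log X`, `lam` and the tolerance `δ` under which the argument runs.
The smoothness cutoff is `exp((32 / δ ^ 2) log lam)`; `tail` makes the divisors beyond `N`
negligible, and `final` absorbs the constants and the number of dyadic blocks into
`exp(δ T / lam)`. -/
structure Regime (δ T lam : ℝ) : Prop where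
  δ_pos : 0 < δ
  δ_le : δ ≤ 1 / 10
  T_pos : 0 < T
  lam_large : 4 ≤ lam
  L_large : 1000 / δ ^ 2 ≤ Real.log lam
  cutoff_le_T : 32 / δ ^ 2 * Real.log lam ≤ δ * T
  cutoff_le_lam : 32 / δ ^ 2 * Real.log lam ≤ δ * lam
  sq_le : lam ^ 2 ≤ 2 * T * Real.log lam
  le_sq : (1 - δ / 16) * (2 * T * Real.log lam) ≤ lam ^ 2
  tail : Real.exp 1 * (T / lam) + 1 ≤ 3 * lam * Real.log (Real.log lam) / (32 / δ ^ 2 * Real.log lam)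
  final : 2 * T + 1 ≤ δ ^ 2 / 128 * Real.exp (δ * (T / lam))

namespace Regime

variable {δ T lam : ℝ}

theorem A_ge (h : Regime δ T lam) : 3200 ≤ 32 / δ ^ 2 := by
  have := h.δ_pos
  have := h.δ_le
  rw [le_div_iff₀ (by positivity)]
  nlinarith

theorem L_ge (h : Regime δ T lam) : 100000 ≤ Real.log lam := by
  refine le_trans ?_ h.L_large
  have := h.δ_pos
  have := h.δ_le
  rw [le_div_iff₀ (by positivity)]
  nlinarith

theorem inv_L_le (h : Regime δ T lam) : 1 / Real.log lam ≤ δ / 1000 := by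
  have h1 := h.L_large
  have hd := h.δ_pos
  have := h.δ_le
  have hL := h.L_ge
  rw [div_le_iff₀ (by positivity)] at h1
  rw [div_le_iff₀ (by linarith)]
  nlinarith

end Regime

theorem log_floor_ge {x : ℝ} (hx : 1 ≤ x) : Real.log x - 1 ≤ Real.log (⌊x⌋₊ : ℝ) := by
  have h1 : (1 : ℝ) ≤ ⌊x⌋₊ := by exact_mod_cast (Nat.one_le_floor_iff x).2 hx
  have h2 : x ≤ 2 * (⌊x⌋₊ : ℝ) := by linarith [Nat.lt_floor_add_one x]
  have h3 := Real.log_le_log (by linarith) h2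
  rw [Real.log_mul (by norm_num) (by linarith)] at h3
  linarith [Real.log_two_lt_d9]

theorem log_floor_le {x : ℝ} (hx : 1 ≤ x) : Real.log (⌊x⌋₊ : ℝ) ≤ Real.log x := by
  have h1 : (1 : ℝ) ≤ ⌊x⌋₊ := by exact_mod_cast (Nat.one_le_floor_iff x).2 hx
  exact Real.log_le_log (by linarith) (Nat.floor_le (by linarith))

/-- `r(p) = lam / (√p log p)` for primes `p` in `[lam, exp((log lam)²)]`, and `r(p) = 0` for the other
primes. -/
def IsResPrime (lam : ℝ) (r : ℕ → ℝ) : Prop :=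
  ∀ p : ℕ, p.Prime → r p = if lam ≤ (p : ℝ) ∧ (p : ℝ) ≤ Real.exp ((Real.log lam) ^ 2)
    then lam / (Real.sqrt p * Real.log p) else 0

theorem sq_mul_log_eq {lam : ℝ} {p : ℕ} (hp : p.Prime) :
    (lam / (Real.sqrt p * Real.log p)) ^ 2 * Real.log p = lam ^ 2 * (1 / (p * Real.log p)) := by
  have hp0 : (0 : ℝ) < p := by exact_mod_cast hp.pos
  have hlog : 0 < Real.log p := Real.log_pos (by exact_mod_cast hp.one_lt)
  rw [div_pow, mul_pow, Real.sq_sqrt hp0.le]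
  field_simp

/-- Since `lam² ∼ 2 T log lam`, the primes between `lam²` and the smoothness cutoff carry energy
`∑ r(p)² log p` close to `T`: the main term is
`2 T log lam (1 / (2 log lam) - 1 / (A log lam))` with `A = 32 / δ ^ 2`. -/
theorem prime_energy_lower {δ T lam : ℝ} (h : Regime δ T lam) :
    (1 - δ / 4) * T ≤ lam ^ 2 * ∑ p ∈ (Ioc ⌊lam ^ 2⌋₊ ⌊Real.exp (32 / δ ^ 2 * Real.log lam)⌋₊).filter
      Nat.Prime, 1 / (p * Real.log p) := by
  have hd := h.δ_pos
  have hd1 := h.δ_le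
  have hA := h.A_ge
  have hL := h.L_ge
  have hT := h.T_pos
  have hl := h.lam_large
  have hiL := h.inv_L_le
  set L := Real.log lam with hLdef
  set A := 32 / δ ^ 2 with hAdef
  have hAd : 1 / A ≤ δ / 320 := by
    rw [hAdef, one_div_div, div_le_div_iff₀ (by norm_num) (by norm_num)]
    nlinarith
  have hlam2 : lam ^ 2 = Real.exp (2 * L) := by
    rw [two_mul, Real.exp_add, hLdef, Real.exp_log (by linarith)]; ring
  have hm3 : 3 ≤ ⌊lam ^ 2⌋₊ := Nat.le_floor (by push_cast; nlinarith)
  have hmk : ⌊lam ^ 2⌋₊ ≤ ⌊Real.exp (A * L)⌋₊ := by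
    apply Nat.floor_le_floor
    rw [hlam2]
    apply Real.exp_le_exp.2
    nlinarith
  have hb := (prime_sum_bounds _ _ hm3 hmk).2
  have hu1 := log_floor_ge (x := lam ^ 2) (by nlinarith)
  have hu2 := log_floor_le (x := lam ^ 2) (by nlinarith)
  have hz1 := log_floor_ge (x := Real.exp (A * L)) (Real.one_le_exp (by nlinarith))
  rw [hlam2, Real.log_exp] at hu1 hu2
  rw [Real.log_exp] at hz1
  rw [← hlam2] at hu1 hu2
  set u := Real.log (⌊lam ^ 2⌋₊ : ℝ)
  set z := Real.log (⌊Real.exp (A * L)⌋₊ : ℝ)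
  have hu : L ≤ u := by linarith
  have hz : A * L / 2 ≤ z := by nlinarith
  have hAL : 0 < A * L := by positivity
  have e1 : 1 / u ≤ δ / 1000 := (one_div_le_one_div_of_le (by linarith) hu).trans hiL
  have e2 : 1 / (2 * L) ≤ 1 / u := one_div_le_one_div_of_le (by linarith) hu2
  have e3 : 1 / z ≤ δ / 80 * (1 / (2 * L)) := by
    calc 1 / z ≤ 1 / (A * L / 2) := one_div_le_one_div_of_le (by linarith) hz
      _ = 1 / A * (2 / L) := by field_simp
      _ ≤ δ / 320 * (2 / L) := by gcongr
      _ = _ := by field_simp; norm_num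
  have e4 : 12 / u ^ 2 ≤ 24 * δ / 1000 * (1 / (2 * L)) := by
    calc 12 / u ^ 2 ≤ 12 / L ^ 2 := by gcongr
      _ = 1 / L * (24 * (1 / (2 * L))) := by field_simp; norm_num
      _ ≤ δ / 1000 * (24 * (1 / (2 * L))) := by gcongr
      _ = _ := by ring
  have hw : 0 < 1 / (2 * L) := by positivity
  have hTw : 2 * T * L * (1 / (2 * L)) = T := by field_simp
  set w := 1 / (2 * L)
  have e5 : (1 - δ / 8) * w ≤ (1 - 1 / u) * (1 / u - 1 / z) - 12 / u ^ 2 := by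
    have : (1 - δ / 1000) * ((1 - δ / 80) * w) ≤ (1 - 1 / u) * (1 / u - 1 / z) := by
      apply mul_le_mul <;> nlinarith
    nlinarith [mul_pos hd hw, mul_pos hd (mul_pos hd hw)]
  calc (1 - δ / 4) * T ≤ (1 - δ / 16) * (1 - δ / 8) * T := by
        apply mul_le_mul_of_nonneg_right _ hT.le
        nlinarith
    _ = ((1 - δ / 16) * (2 * T * L)) * ((1 - δ / 8) * w) := by
        rw [show ((1 - δ / 16) * (2 * T * L)) * ((1 - δ / 8) * w)
          = (1 - δ / 16) * (1 - δ / 8) * (2 * T * L * w) by ring, hTw]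
    _ ≤ lam ^ 2 * ((1 - 1 / u) * (1 / u - 1 / z) - 12 / u ^ 2) := by
        apply mul_le_mul h.le_sq e5 _ (sq_nonneg _)
        apply mul_nonneg _ hw.le
        linarith
    _ ≤ _ := by gcongr

/-- The primes above the smoothness cutoff carry little energy. -/
theorem prime_energy_upper {δ T lam : ℝ} (h : Regime δ T lam) :
    lam ^ 2 * ∑ p ∈ (Ioc ⌊Real.exp (32 / δ ^ 2 * Real.log lam)⌋₊
      ⌊Real.exp (Real.log lam ^ 2)⌋₊).filter Nat.Prime, 1 / (p * Real.log p) ≤ δ ^ 2 / 4 * T := by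
  have hd := h.δ_pos
  have hd1 := h.δ_le
  have hA := h.A_ge
  have hL := h.L_ge
  have hT := h.T_pos
  have hLl := h.L_large
  set L := Real.log lam with hLdef
  have hAL' : 32 / δ ^ 2 ≤ L := by
    refine le_trans ?_ hLl
    gcongr
    norm_num
  have hAd : 1 / (32 / δ ^ 2) = δ ^ 2 / 32 := by rw [one_div_div]
  set A := 32 / δ ^ 2 with hAdef
  have hAL : 0 < A * L := by positivity
  have hm3 : 3 ≤ ⌊Real.exp (A * L)⌋₊ := Nat.le_floor (by
    push_cast
    have := Real.add_one_le_exp (A * L)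
    nlinarith)
  have hmk : ⌊Real.exp (A * L)⌋₊ ≤ ⌊Real.exp (L ^ 2)⌋₊ := by
    apply Nat.floor_le_floor
    apply Real.exp_le_exp.2
    nlinarith
  have hb := (prime_sum_bounds _ _ hm3 hmk).1
  have hz1 := log_floor_ge (x := Real.exp (A * L)) (Real.one_le_exp (by nlinarith))
  rw [Real.log_exp] at hz1
  set z := Real.log (⌊Real.exp (A * L)⌋₊ : ℝ)
  have hz : A * L / 2 ≤ z := by nlinarith
  have hz16 : 16 ≤ z := by nlinarith
  have hk : 0 ≤ 1 / Real.log (⌊Real.exp (L ^ 2)⌋₊ : ℝ) :=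
    div_nonneg zero_le_one (Real.log_natCast_nonneg _)
  have e1 : 12 / z ^ 2 ≤ 1 / z := by
    rw [div_le_div_iff₀ (by positivity) (by positivity)]
    nlinarith
  have e2 : 1 / z ≤ 1 / (A * L / 2) := one_div_le_one_div_of_le (by linarith) hz
  calc _ ≤ (2 * T * L) * (2 * (1 / (A * L / 2))) := by
        apply mul_le_mul h.sq_le (by linarith) _ (by positivity)
        exact sum_nonneg fun p _ => div_nonneg zero_le_one
          (mul_nonneg (Nat.cast_nonneg _) (Real.log_natCast_nonneg _))
    _ = 8 * T * (1 / A) := by field_simp; norm_num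
    _ = _ := by rw [hAd]; ring

/-! ### Mean value of the divisor sums -/

section Resonator

variable {δ T lam X : ℝ} {r : ℕ → ℝ}

theorem IsResPrime.of_ne_zero (hrp : IsResPrime lam r) {p : ℕ} (hp : p.Prime) (h : r p ≠ 0) :
    (lam ≤ (p : ℝ) ∧ (p : ℝ) ≤ Real.exp ((Real.log lam) ^ 2)) ∧
      r p = lam / (Real.sqrt p * Real.log p) := by
  have := hrp p hp
  split_ifs at this with hc
  · exact ⟨hc, this⟩
  · exact absurd this h

/-- Discarding the primes that divide a given `m ≤ X` barely changes the energy: they exceed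
`lam²`, so `r(q)² log q ≤ 1 / log q ≤ log q / (log lam)²`, and their logarithms sum to at most
`T`. -/
theorem prime_energy_coprime (h : Regime δ T lam) (hrp : IsResPrime lam r) {m : ℕ} (hm1 : 1 ≤ m)
    (hmT : Real.log m ≤ T) :
    (1 - δ / 2) * T ≤ ∑ q ∈ Icc 1 ⌊Real.exp (32 / δ ^ 2 * Real.log lam)⌋₊ with
      (q.Prime ∧ ⌊lam ^ 2⌋₊ < q) ∧ ¬ q ∣ m, r q ^ 2 * Real.log q := by
  have hd := h.δ_pos
  have hA := h.A_ge
  have hL := h.L_ge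
  have hT := h.T_pos
  have hl := h.lam_large
  have hLl := h.L_large
  have hiL := h.inv_L_le
  have hen := prime_energy_lower h
  set L := Real.log lam with hLdef
  have hAL' : 32 / δ ^ 2 ≤ L := by
    refine le_trans ?_ hLl
    gcongr
    norm_num
  set A := 32 / δ ^ 2 with hAdef
  set Z := ⌊Real.exp (A * L)⌋₊ with hZ
  set m0 := ⌊lam ^ 2⌋₊ with hm0
  have hlam2 : lam ^ 2 = Real.exp (2 * L) := by
    rw [two_mul, Real.exp_add, hLdef, Real.exp_log (by linarith)]; ring
  have hZle : (Z : ℝ) ≤ Real.exp (A * L) := Nat.floor_le (Real.exp_pos _).le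
  have hval : ∀ q : ℕ, q.Prime → m0 < q → q ≤ Z →
      r q ^ 2 * Real.log q = lam ^ 2 * (1 / (q * Real.log q)) := by
    intro q hq h1 h2
    have h3 : lam ^ 2 < q := (Nat.floor_lt (sq_nonneg _)).1 h1
    have h4 : (q : ℝ) ≤ Real.exp (A * L) := (Nat.cast_le.2 h2).trans hZle
    rw [hrp q hq, if_pos, sq_mul_log_eq hq]
    refine ⟨by nlinarith, h4.trans (Real.exp_le_exp.2 ?_)⟩
    nlinarith
  have hset : ((Icc 1 Z).filter fun q => (q.Prime ∧ m0 < q) ∧ ¬ q ∣ m)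
      = ((Ioc m0 Z).filter Nat.Prime).filter fun q => ¬ q ∣ m := by
    ext q
    simp only [mem_filter, mem_Icc, mem_Ioc]
    constructor
    · rintro ⟨⟨_, h2⟩, ⟨h3, h4⟩, h5⟩
      exact ⟨⟨⟨h4, h2⟩, h3⟩, h5⟩
    · rintro ⟨⟨⟨h4, h2⟩, h3⟩, h5⟩
      exact ⟨⟨h3.one_le, h2⟩, ⟨h3, h4⟩, h5⟩
  rw [hset]
  have hsplit := sum_filter_add_sum_filter_not ((Ioc m0 Z).filter Nat.Prime) (fun q => q ∣ m)
    (fun q : ℕ => r q ^ 2 * Real.log q)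
  have hfull : ∑ q ∈ (Ioc m0 Z).filter Nat.Prime, r q ^ 2 * Real.log q
      = lam ^ 2 * ∑ p ∈ (Ioc m0 Z).filter Nat.Prime, 1 / (p * Real.log p) := by
    rw [mul_sum]
    refine sum_congr rfl fun q hq => ?_
    obtain ⟨h1, h2⟩ := mem_filter.1 hq
    obtain ⟨h3, h4⟩ := mem_Ioc.1 h1
    exact hval q h2 h3 h4
  have hloss : ∑ q ∈ ((Ioc m0 Z).filter Nat.Prime).filter (fun q => q ∣ m),
      r q ^ 2 * Real.log q ≤ δ / 1000 * T := by
    calc _ ≤ ∑ q ∈ ((Ioc m0 Z).filter Nat.Prime).filter (fun q => q ∣ m),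
          Real.log q * (1 / L ^ 2) := by
          refine sum_le_sum fun q hq => ?_
          obtain ⟨h1, _⟩ := mem_filter.1 hq
          obtain ⟨h1, h2⟩ := mem_filter.1 h1
          obtain ⟨h3, h4⟩ := mem_Ioc.1 h1
          rw [hval q h2 h3 h4]
          have h5 : lam ^ 2 < q := (Nat.floor_lt (sq_nonneg _)).1 h3
          have h6 : 2 * L ≤ Real.log q := by
            have := Real.log_le_log (by positivity) h5.le
            rwa [hlam2, Real.log_exp] at this
          have hq0 : (0 : ℝ) < q := by exact_mod_cast h2.pos
          have h7 : 0 < Real.log q := by linarith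
          calc lam ^ 2 * (1 / (q * Real.log q)) ≤ q * (1 / (q * Real.log q)) := by gcongr
            _ = Real.log q * (1 / Real.log q ^ 2) := by field_simp
            _ ≤ _ := by
              have : L ≤ Real.log q := by linarith
              gcongr
      _ ≤ (∑ q ∈ m.primeFactors, Real.log q) * (1 / L ^ 2) := by
          rw [← sum_mul]
          gcongr
          · intro q hq
            obtain ⟨h1, h2⟩ := mem_filter.1 hq
            exact Nat.mem_primeFactors.2 ⟨(mem_filter.1 h1).2, h2, by omega⟩
      _ ≤ T * (1 / L ^ 2) := by
          gcongr
          exact (sum_log_primeFactors_le m hm1).trans hmT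
      _ ≤ T * (δ / 1000) := by
          refine mul_le_mul_of_nonneg_left ?_ hT.le
          refine le_trans ?_ hiL
          apply one_div_le_one_div_of_le <;> nlinarith
      _ = _ := mul_comm _ _
  rw [← hfull] at hen
  nlinarith [mul_pos hd hT]

/-- A fixed proportion of the energy lies on `n` with `log n ≥ (1 - 2 δ) T`. -/
theorem small_mass_le (h : Regime δ T lam) (hX : 0 < X) (hXT : Real.log X = T)
    (hr : IsResonator r) (hrp : IsResPrime lam r) :
    ∑ n ∈ Icc 1 ⌊Real.exp ((1 - δ) * T - 32 / δ ^ 2 * Real.log lam)⌋₊, r n ^ 2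
      ≤ (1 - δ / 2) * ∑ n ∈ Icc 1 ⌊X⌋₊, r n ^ 2 := by
  have hd := h.δ_pos
  have hd1 := h.δ_le
  have hA := h.A_ge
  have hL := h.L_ge
  have hT := h.T_pos
  have hl := h.lam_large
  have hALT := h.cutoff_le_T
  set L := Real.log lam with hLdef
  set A := 32 / δ ^ 2 with hAdef
  set Y := ⌊Real.exp ((1 - δ) * T - A * L)⌋₊ with hY
  set Z := ⌊Real.exp (A * L)⌋₊ with hZ
  have hXe : X = Real.exp T := by rw [← hXT, Real.exp_log hX]
  have hYle : (Y : ℝ) ≤ Real.exp ((1 - δ) * T - A * L) := Nat.floor_le (Real.exp_pos _).le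
  have hZle : (Z : ℝ) ≤ Real.exp (A * L) := Nat.floor_le (Real.exp_pos _).le
  have hYZ' : ((Y * Z : ℕ) : ℝ) ≤ Real.exp ((1 - δ) * T) := by
    push_cast
    calc (Y : ℝ) * Z ≤ Real.exp ((1 - δ) * T - A * L) * Real.exp (A * L) := by gcongr
      _ = _ := by rw [← Real.exp_add]; ring_nf
  have hYZ : Y * Z ≤ ⌊X⌋₊ := by
    apply Nat.le_floor
    refine hYZ'.trans ?_
    rw [hXe]
    apply Real.exp_le_exp.2
    nlinarith
  have hY1 : 1 ≤ Y := (Nat.one_le_floor_iff _).2 (Real.one_le_exp (by nlinarith))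
  have hZ1 : 1 ≤ Z := (Nat.one_le_floor_iff _).2 (Real.one_le_exp (by nlinarith))
  have hYZ1 : 1 ≤ Y * Z := Nat.mul_pos hY1 hZ1
  have hlogYZ : Real.log (Y * Z : ℕ) ≤ (1 - δ) * T := by
    rw [Real.log_le_iff_le_exp (by exact_mod_cast hYZ1)]
    exact hYZ'
  have hYT : Real.log Y ≤ T := by
    rw [Real.log_le_iff_le_exp (by exact_mod_cast hY1)]
    refine hYle.trans (Real.exp_le_exp.2 ?_)
    nlinarith [mul_pos hd hT, mul_pos (show 0 < A by linarith) (show 0 < L by linarith)]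
  have key := energy_growth hr Y Z ⌊X⌋₊ hYZ hYZ1 (fun q => ⌊lam ^ 2⌋₊ < q) ((1 - δ / 2) * T) ?_
  · have h2 := key.trans (mul_le_mul_of_nonneg_right hlogYZ (sum_nonneg fun n _ => sq_nonneg (r n)))
    have h3 : (1 - δ / 2) * ∑ m ∈ Icc 1 Y, r m ^ 2 ≤ (1 - δ) * ∑ n ∈ Icc 1 ⌊X⌋₊, r n ^ 2 := by
      refine le_of_mul_le_mul_left ?_ hT
      linarith
    have hD : 0 ≤ ∑ n ∈ Icc 1 ⌊X⌋₊, r n ^ 2 := sum_nonneg fun n _ => sq_nonneg (r n)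
    refine le_of_mul_le_mul_left (h3.trans ?_) (show 0 < 1 - δ / 2 by linarith)
    nlinarith [mul_nonneg (sq_nonneg δ) hD]
  · intro m hm _
    obtain ⟨hm1, hm2⟩ := mem_Icc.1 hm
    refine prime_energy_coprime h hrp hm1 (le_trans ?_ hYT)
    exact Real.log_le_log (by exact_mod_cast hm1) (by exact_mod_cast hm2)

/-- In the mean, the prime factors above the smoothness cutoff contribute little to `log n`. -/
theorem large_primes_energy (h : Regime δ T lam)
    (hr : IsResonator r) (hrp : IsResPrime lam r) (K : ℕ) :
    ∑ n ∈ Icc 1 K, r n ^ 2 * ∑ p ∈ n.primeFactors with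
        ¬ p ≤ ⌊Real.exp (32 / δ ^ 2 * Real.log lam)⌋₊, Real.log p
      ≤ δ ^ 2 / 4 * T * ∑ n ∈ Icc 1 K, r n ^ 2 := by
  refine (sum_large_primes_le hr K _).trans ?_
  have hD : 0 ≤ ∑ n ∈ Icc 1 K, r n ^ 2 := sum_nonneg fun n _ => sq_nonneg (r n)
  refine mul_le_mul_of_nonneg_right (le_trans ?_ (prime_energy_upper h)) hD
  set Z := ⌊Real.exp (32 / δ ^ 2 * Real.log lam)⌋₊
  rw [mul_sum]
  have hnn : ∀ p : ℕ, 0 ≤ lam ^ 2 * (1 / (p * Real.log p)) := fun p =>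
    mul_nonneg (sq_nonneg _) (div_nonneg zero_le_one
      (mul_nonneg (Nat.cast_nonneg _) (Real.log_natCast_nonneg _)))
  calc _ ≤ ∑ p ∈ Icc 1 K with p.Prime ∧ ¬ p ≤ Z,
        if p ≤ ⌊Real.exp (Real.log lam ^ 2)⌋₊ then lam ^ 2 * (1 / (p * Real.log p)) else 0 := by
        refine sum_le_sum fun p hp => ?_
        have hpp := (mem_filter.1 hp).2.1
        rw [hrp p hpp]
        split_ifs with h1 h2 h2
        · rw [sq_mul_log_eq hpp]
        · exact absurd (Nat.le_floor h1.2) h2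
        · simpa using hnn p
        · simp
    _ ≤ _ := by
        rw [← sum_filter]
        refine sum_le_sum_of_subset_of_nonneg ?_ fun p _ _ => hnn p
        intro p hp
        obtain ⟨h1, h2⟩ := mem_filter.1 hp
        obtain ⟨h3, h4, h5⟩ := mem_filter.1 h1
        exact mem_filter.2 ⟨mem_Ioc.2 ⟨not_le.1 h5, h2⟩, h4⟩

theorem smoothLog_eq (hr : IsResonator r) {n : ℕ} (hn : r n ≠ 0) (Z : ℕ) :
    smoothLog Z n = Real.log n - ∑ p ∈ n.primeFactors with ¬ p ≤ Z, Real.log p := by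
  have h1 := sum_filter_add_sum_filter_not n.primeFactors (fun p => p ≤ Z)
    (fun p : ℕ => Real.log p)
  have h2 : ∑ p ∈ n.primeFactors, Real.log p = Real.log n := by
    conv_rhs => rw [← Nat.prod_primeFactors_of_squarefree (hr.squarefree hn), Nat.cast_prod]
    rw [Real.log_prod]
    intro p hp
    exact_mod_cast (Nat.prime_of_mem_primeFactors hp).ne_zero
  rw [smoothLog]
  linarith

/-- The exponent `σ = 1 / (A log lam)`, where `A = 32 / δ ^ 2`, keeps `p ^ σ ≤ e` up to the smoothness
cutoff; the hypothesis on `log N` then makes the contribution of divisors beyond `N` at most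
`1 / 2`. -/
theorem divisor_sum_ge (h : Regime δ T lam) {N : ℝ}
    (hr : IsResonator r) (hrp : IsResPrime lam r)
    (hN : 3 * lam * Real.log (Real.log lam) < Real.log N) (hN0 : 0 < N) {n : ℕ} (hn : r n ≠ 0)
    (hnT : Real.log n ≤ T) :
    1 / 2 * Real.exp ((1 - δ) *
      (smoothLog ⌊Real.exp (32 / δ ^ 2 * Real.log lam)⌋₊ n / lam))
      ≤ ∑ a ∈ n.divisors with a ≤ ⌊N⌋₊, 1 / (r a * Real.sqrt a) := by
  have hA := h.A_ge
  have hL := h.L_ge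
  have hl := h.lam_large
  have htail := h.tail
  have hc := h.cutoff_le_lam
  have hsq := hr.squarefree hn
  set L := Real.log lam with hLdef
  set A := 32 / δ ^ 2 with hAdef
  have hAL : 0 < A * L := by positivity
  refine divisor_sum_lower hr (σ := 1 / (A * L)) (by linarith) (by positivity) hn ?_ ?_ hN0 ?_
  · intro p hp
    exact (hrp.of_ne_zero (Nat.prime_of_mem_primeFactors hp)
      (hr.ne_zero_of_dvd hn (Nat.dvd_of_mem_primeFactors hp))).2
  · intro p hp hpZ
    have hp0 : (0 : ℝ) < p := by exact_mod_cast (Nat.prime_of_mem_primeFactors hp).pos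
    have h1 : (p : ℝ) ≤ Real.exp (A * L) :=
      (Nat.cast_le.2 hpZ).trans (Nat.floor_le (Real.exp_pos _).le)
    have h2 : Real.log p ≤ A * L := by rwa [Real.log_le_iff_le_exp hp0]
    constructor
    · rw [Real.rpow_def_of_pos hp0]
      apply Real.exp_le_exp.2
      rw [mul_one_div, div_le_one hAL]
      exact h2
    · rw [div_le_iff₀ (by linarith)]
      linarith
  · rw [Real.rpow_def_of_pos hN0, ← Real.exp_add]
    have h1 : Real.exp 1 * (Real.log n / lam) ≤ Real.exp 1 * (T / lam) := by gcongr
    have h2 : 3 * lam * Real.log L / (A * L) ≤ Real.log N * (1 / (A * L)) := by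
      rw [mul_one_div]
      gcongr
    have h3 : Real.exp (-1) ≤ 1 / 2 := by
      have := Real.exp_neg_one_lt_d9
      linarith
    refine le_trans (Real.exp_le_exp.2 ?_) h3
    linarith

/-- The divisor sums `W(n)` are of size `exp(T / lam)` in the mean. The energy above `Y` has smooth
parts of average logarithm at least `(1 - 3 δ) T`, and convexity of `exp` turns the lower bound
`W(n) ≥ exp(κ smoothLog Z n) / 2` into one for the mean. -/
theorem resonator_energy (h : Regime δ T lam) (hX : 0 < X) (hXT : Real.log X = T)
    {N : ℝ} (hr : IsResonator r) (hrp : IsResPrime lam r)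
    (hN : 3 * lam * Real.log (Real.log lam) < Real.log N) (hN0 : 0 < N) :
    δ / 4 * Real.exp ((1 - 4 * δ) * (T / lam)) * ∑ n ∈ Icc 1 ⌊X⌋₊, r n ^ 2
      ≤ ∑ n ∈ Icc 1 ⌊X⌋₊, r n ^ 2 *
        ∑ a ∈ n.divisors with a ≤ ⌊N⌋₊, 1 / (r a * Real.sqrt a) := by
  have hd := h.δ_pos
  have hd1 := h.δ_le
  have hT := h.T_pos
  have hl := h.lam_large
  have hALT := h.cutoff_le_T
  have hsm := small_mass_le h hX hXT hr hrp
  have hlp := large_primes_energy h hr hrp ⌊X⌋₊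
  have hXe : X = Real.exp T := by rw [← hXT, Real.exp_log hX]
  set L := Real.log lam with hLdef
  set A := 32 / δ ^ 2 with hAdef
  have hA := h.A_ge
  have hL := h.L_ge
  have hAL : 0 < A * L := by positivity
  set Y := ⌊Real.exp ((1 - δ) * T - A * L)⌋₊ with hY
  set Z := ⌊Real.exp (A * L)⌋₊ with hZ
  set D := ∑ n ∈ Icc 1 ⌊X⌋₊, r n ^ 2 with hD
  have hYX : Y ≤ ⌊X⌋₊ := by
    apply Nat.floor_le_floor
    rw [hXe]
    apply Real.exp_le_exp.2
    nlinarith [mul_pos hd hT]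
  have hunion : ∀ f : ℕ → ℝ, ∑ n ∈ Icc 1 Y, f n + ∑ n ∈ Ioc Y ⌊X⌋₊, f n
      = ∑ n ∈ Icc 1 ⌊X⌋₊, f n := by
    intro f
    have e : ∀ k : ℕ, Icc 1 k = Ioc 0 k := fun k => by ext; simp [Nat.succ_le_iff]
    rw [e, e, sum_Ioc_consecutive f (Nat.zero_le _) hYX]
  have hsub : Ioc Y ⌊X⌋₊ ⊆ Icc 1 ⌊X⌋₊ := fun n hn => by
    obtain ⟨h1, h2⟩ := mem_Ioc.1 hn
    exact mem_Icc.2 ⟨by omega, h2⟩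
  set M := ∑ n ∈ Ioc Y ⌊X⌋₊, r n ^ 2 with hM
  have hMD : δ / 2 * D ≤ M := by
    have := hunion fun n => r n ^ 2
    linarith
  have hD0 : 0 ≤ D := sum_nonneg fun n _ => sq_nonneg (r n)
  have hM0 : 0 ≤ M := sum_nonneg fun n _ => sq_nonneg (r n)
  have hsmooth : (1 - 3 * δ) * T * M ≤ ∑ n ∈ Ioc Y ⌊X⌋₊, r n ^ 2 * smoothLog Z n := by
    have h1 : ∑ n ∈ Ioc Y ⌊X⌋₊, (r n ^ 2 * ((1 - 2 * δ) * T) -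
        r n ^ 2 * ∑ p ∈ n.primeFactors with ¬ p ≤ Z, Real.log p)
        ≤ ∑ n ∈ Ioc Y ⌊X⌋₊, r n ^ 2 * smoothLog Z n := by
      refine sum_le_sum fun n hn => ?_
      by_cases hrn : r n = 0
      · simp [hrn]
      rw [smoothLog_eq hr hrn Z, ← mul_sub]
      obtain ⟨h1, h2⟩ := mem_Ioc.1 hn
      have h3 : Real.exp ((1 - δ) * T - A * L) < n := (Nat.floor_lt (Real.exp_pos _).le).1 h1
      have h4 := Real.log_le_log (Real.exp_pos _) h3.le
      rw [Real.log_exp] at h4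
      gcongr
      linarith
    have h2 : ∑ n ∈ Ioc Y ⌊X⌋₊, r n ^ 2 * ∑ p ∈ n.primeFactors with ¬ p ≤ Z, Real.log p
        ≤ δ ^ 2 / 4 * T * D := by
      refine le_trans (sum_le_sum_of_subset_of_nonneg hsub fun n _ _ => ?_) hlp
      exact mul_nonneg (sq_nonneg _) (sum_nonneg fun p _ => Real.log_natCast_nonneg p)
    rw [sum_sub_distrib, ← sum_mul] at h1
    have h3 : δ ^ 2 / 4 * T * D ≤ δ / 2 * T * M := by
      have := mul_le_mul_of_nonneg_left hMD (show 0 ≤ δ / 2 * T by positivity)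
      linarith
    have h4 : 0 ≤ δ * T * M := by positivity
    linarith
  set κ := (1 - δ) / lam with hκ
  have hκ0 : 0 ≤ κ := div_nonneg (by linarith) (by linarith)
  set c := (1 - 3 * δ) * T with hc
  have hpt : ∀ n ∈ Icc 1 ⌊X⌋₊, 1 / 2 * Real.exp (κ * c) * (r n ^ 2 * (1 + κ * (smoothLog Z n - c)))
      ≤ r n ^ 2 * ∑ a ∈ n.divisors with a ≤ ⌊N⌋₊, 1 / (r a * Real.sqrt a) := by
    intro n hn
    obtain ⟨h1, h2⟩ := mem_Icc.1 hn
    by_cases hrn : r n = 0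
    · simp [hrn]
    have h3 : Real.log n ≤ T := by
      rw [← hXT]
      exact Real.log_le_log (by exact_mod_cast h1) ((Nat.le_floor_iff hX.le).1 h2)
    have h4 := divisor_sum_ge h hr hrp hN hN0 hrn h3
    have h5 : (1 - δ) * (smoothLog Z n / lam) = κ * c + κ * (smoothLog Z n - c) := by
      rw [hκ]; ring
    rw [h5, Real.exp_add] at h4
    -- tangent line of `exp` at the average value `c` of the smooth part
    have h6 := Real.add_one_le_exp (κ * (smoothLog Z n - c))
    calc _ = r n ^ 2 * (1 / 2 * (Real.exp (κ * c) * (κ * (smoothLog Z n - c) + 1))) := by ring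
      _ ≤ r n ^ 2 * (1 / 2 * (Real.exp (κ * c) * Real.exp (κ * (smoothLog Z n - c)))) := by gcongr
      _ ≤ _ := by gcongr
  have hWnn : ∀ n : ℕ, 0 ≤ r n ^ 2 * ∑ a ∈ n.divisors with a ≤ ⌊N⌋₊, 1 / (r a * Real.sqrt a) :=
    fun n => mul_nonneg (sq_nonneg _) (sum_nonneg fun a _ =>
      div_nonneg zero_le_one (mul_nonneg (hr.nonneg a) (Real.sqrt_nonneg _)))
  have hκc : (1 - 4 * δ) * (T / lam) ≤ κ * c := by
    rw [hκ, hc, show (1 - δ) / lam * ((1 - 3 * δ) * T) = (1 - δ) * (1 - 3 * δ) * (T / lam) by ring]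
    gcongr
    nlinarith
  calc δ / 4 * Real.exp ((1 - 4 * δ) * (T / lam)) * D
      = 1 / 2 * Real.exp ((1 - 4 * δ) * (T / lam)) * (δ / 2 * D) := by ring
    _ ≤ 1 / 2 * Real.exp (κ * c) * M := by gcongr
    _ ≤ 1 / 2 * Real.exp (κ * c) * (M + κ * (∑ n ∈ Ioc Y ⌊X⌋₊, r n ^ 2 * smoothLog Z n - c * M)) := by
        gcongr
        nlinarith [mul_nonneg hκ0 (sub_nonneg.2 hsmooth)]
    _ = ∑ n ∈ Ioc Y ⌊X⌋₊, 1 / 2 * Real.exp (κ * c) * (r n ^ 2 * (1 + κ * (smoothLog Z n - c))) := by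
        rw [← mul_sum, hM, mul_sum, ← sum_sub_distrib, mul_sum, ← sum_add_distrib]
        congr 1
        exact sum_congr rfl fun n _ => by ring
    _ ≤ ∑ n ∈ Ioc Y ⌊X⌋₊, r n ^ 2 * ∑ a ∈ n.divisors with a ≤ ⌊N⌋₊, 1 / (r a * Real.sqrt a) :=
        sum_le_sum fun n hn => hpt n (hsub hn)
    _ ≤ _ := sum_le_sum_of_subset_of_nonneg hsub fun n _ _ => hWnn n

/-- The lower bound for the quotient with a fixed loss `10 δ`: the square of `resonator_energy` fed
into `resonator_main`. -/
theorem resNum_div_ge (h : Regime δ T lam) (hX : 1 ≤ X) (hXT : Real.log X = T)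
    {N : ℝ} (hr : IsResonator r) (hrp : IsResPrime lam r)
    (hN : 3 * lam * Real.log (Real.log lam) < Real.log N) :
    N * Real.exp ((2 - 10 * δ) * (T / lam))
      ≤ resNum r ⌊N⌋₊ ⌊X⌋₊ / ∑ n ∈ Icc 1 ⌊X⌋₊, r n ^ 2 := by
  have hd := h.δ_pos
  have hd1 := h.δ_le
  have hT := h.T_pos
  have hl := h.lam_large
  have hL := h.L_ge
  have hiL := h.inv_L_le
  have hfin := h.final
  have hX1 : 1 ≤ ⌊X⌋₊ := (Nat.one_le_floor_iff X).2 hX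
  set D := ∑ n ∈ Icc 1 ⌊X⌋₊, r n ^ 2 with hD
  have hD1 : 1 ≤ D := by
    have := single_le_sum (f := fun n => r n ^ 2) (fun n _ => sq_nonneg (r n))
      (mem_Icc.2 ⟨le_rfl, hX1⟩)
    simpa [hr.map_one] using this
  have hlogN : 0 < Real.log N := by
    refine lt_trans ?_ hN
    have : 0 < Real.log (Real.log lam) := Real.log_pos (by linarith)
    positivity
  -- `Real.log` is even, so the hypothesis on `log N` allows `N < -1`; then the sum is empty.
  rcases lt_or_ge N 0 with hneg | hnn
  · have h1 : resNum r ⌊N⌋₊ ⌊X⌋₊ = 0 := by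
      rw [Nat.floor_of_nonpos hneg.le]; simp [resNum]
    rw [h1, zero_div]
    exact mul_nonpos_of_nonpos_of_nonneg hneg.le (Real.exp_pos _).le
  have hN1 : 1 < N := (Real.log_pos_iff hnn).1 hlogN
  have hE := resonator_energy h (by linarith) hXT hr hrp hN (by linarith)
  set V := T / lam with hV
  have hV0 : 0 < V := by positivity
  have hmain := resonator_main hr ⌊N⌋₊ ⌊X⌋₊ (Nat.log 2 ⌊X⌋₊ + 1) (Real.exp (δ * V))
    (fun a ha => Nat.lt_succ_of_le (Nat.log_mono_right (mem_Icc.1 ha).2)) ?_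
  · set R := resNum r ⌊N⌋₊ ⌊X⌋₊
    set S := ∑ n ∈ Icc 1 ⌊X⌋₊, r n ^ 2 *
        ∑ a ∈ n.divisors with a ≤ ⌊N⌋₊, 1 / (r a * Real.sqrt a)
    have hJ : ((Nat.log 2 ⌊X⌋₊ + 1 : ℕ) : ℝ) ≤ 2 * T + 1 := by
      have h1 : (2 : ℝ) ^ Nat.log 2 ⌊X⌋₊ ≤ X := by
        have : ((2 ^ Nat.log 2 ⌊X⌋₊ : ℕ) : ℝ) ≤ (⌊X⌋₊ : ℕ) :=
          Nat.cast_le.2 (Nat.pow_log_le_self 2 (by omega))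
        push_cast at this
        exact this.trans (Nat.floor_le (by linarith))
      have h2 := Real.log_le_log (by positivity) h1
      rw [Real.log_pow, hXT] at h2
      have h3 := Real.log_two_gt_d9
      have h4 : (0 : ℝ) ≤ Nat.log 2 ⌊X⌋₊ := Nat.cast_nonneg _
      push_cast
      nlinarith
    have hNf : N / 2 ≤ (⌊N⌋₊ : ℝ) := by
      have h1 : (1 : ℝ) ≤ ⌊N⌋₊ := by exact_mod_cast (Nat.one_le_floor_iff N).2 hN1.le
      linarith [Nat.lt_floor_add_one N]
    have hR0 : 0 ≤ R := by
      refine sum_nonneg fun m _ => sum_nonneg fun n _ => sum_nonneg fun a _ => sum_nonneg fun b _ => ?_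
      split_ifs
      · exact mul_nonneg (hr.nonneg a) (hr.nonneg b)
      · exact le_rfl
    set E := Real.exp ((1 - 4 * δ) * V) with hEdef
    have hE0 : 0 < E := Real.exp_pos _
    have step : N / 2 * (δ / 4 * E * D) ^ 2
        ≤ 4 * (δ ^ 2 / 128 * Real.exp (δ * V)) * Real.exp (δ * V) * R * D := by
      calc _ ≤ (⌊N⌋₊ : ℝ) * S ^ 2 := by gcongr
        _ ≤ _ := hmain
        _ ≤ _ := by
          gcongr
          exact hJ.trans hfin
    rw [le_div_iff₀ (by linarith)]
    have hexp : Real.exp ((2 - 10 * δ) * V) * (Real.exp (δ * V) * Real.exp (δ * V)) = E ^ 2 := by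
      rw [hEdef, sq, ← Real.exp_add, ← Real.exp_add, ← Real.exp_add]
      ring_nf
    have hG : 0 < Real.exp (δ * V) := Real.exp_pos _
    set G := Real.exp (δ * V)
    have hfac : 0 < δ ^ 2 / 32 * (G * G) * D := by positivity
    refine le_of_mul_le_mul_right ?_ hfac
    calc N * Real.exp ((2 - 10 * δ) * V) * D * (δ ^ 2 / 32 * (G * G) * D)
        = N / 2 * (δ / 4 * (E ^ 2) ^ (1 : ℕ) * D) * (δ / 4 * D) := by rw [← hexp]; ring
      _ = N / 2 * (δ / 4 * E * D) ^ 2 := by ring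
      _ ≤ _ := step
      _ = _ := by ring
  · intro n hn hrn
    obtain ⟨h1, h2⟩ := mem_Icc.1 hn
    refine (sum_inv_divisors_le (hr.squarefree hrn) (lam := lam) (by linarith) fun p hp =>
      (hrp.of_ne_zero (Nat.prime_of_mem_primeFactors hp)
        (hr.ne_zero_of_dvd hrn (Nat.dvd_of_mem_primeFactors hp))).1.1).trans ?_
    apply Real.exp_le_exp.2
    have h3 : Real.log n ≤ T := by
      rw [← hXT]
      exact Real.log_le_log (by exact_mod_cast h1) ((Nat.le_floor_iff (by linarith)).1 h2)
    calc Real.log n / (lam * Real.log lam) ≤ T / (lam * Real.log lam) := by gcongr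
      _ = 1 / Real.log lam * V := by rw [hV]; field_simp
      _ ≤ δ * V := by gcongr; linarith

end Resonator

/-! ### Large `X` and the diagonal choice of the tolerance -/

/-- With `ℓ = log T` and `lam = √(T ℓ)` one has `ℓ / 2 ≤ log lam ≤ ℓ`, `T / lam = lam / ℓ` and
`ℓ ^ 2 = o(√T)`, from which every condition follows. -/
theorem eventually_regime {δ : ℝ} (hd : 0 < δ) (hd1 : δ ≤ 1 / 10) :
    ∀ᶠ T : ℝ in atTop, Regime δ T (Real.sqrt (T * Real.log T)) := by
  have hlog := Real.tendsto_log_atTop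
  have E1 := hlog.eventually (eventually_ge_atTop (2 * (1000 / δ ^ 2)))
  have E2 := hlog.eventually ((Real.tendsto_log_atTop.comp
    (tendsto_id.atTop_div_const (show (0 : ℝ) < 2 by norm_num))).eventually
      (eventually_ge_atTop (4 / 3 * (32 / δ ^ 2))))
  have E3 := hlog.eventually (Real.isLittleO_log_id_atTop.bound (show 0 < δ / 16 by positivity))
  have E4 := (isLittleO_log_rpow_rpow_atTop (s := 1 / 2) 2 (by norm_num)).bound
    (show 0 < δ / 2 by positivity)
  filter_upwards [E1, E2, E3, E4, eventually_ge_atTop (384 / δ ^ 2)] with T h1 h2 h3 h4 h5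
  have hA : 3200 ≤ 32 / δ ^ 2 := by
    rw [le_div_iff₀ (by positivity)]
    nlinarith
  have hA' : 1000 / δ ^ 2 = 32 / δ ^ 2 * (1000 / 32) := by ring
  have hA'' : 384 / δ ^ 2 = 12 * (32 / δ ^ 2) := by ring
  simp only [Function.comp, id] at h2 h3
  set A := 32 / δ ^ 2 with hAdef
  set ℓ := Real.log T with hℓ
  rw [hA'] at h1
  rw [hA''] at h5
  have hℓ1 : 2 * A ≤ ℓ := by linarith
  have hT0 : 0 < T := by linarith
  have hlℓ : 0 ≤ Real.log ℓ := Real.log_nonneg (by linarith)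
  rw [Real.norm_of_nonneg hlℓ, Real.norm_of_nonneg (by linarith)] at h3
  rw [← Real.sqrt_eq_rpow, Real.norm_of_nonneg (Real.sqrt_nonneg _), Real.rpow_two,
    Real.norm_of_nonneg (sq_nonneg _)] at h4
  set lam := Real.sqrt (T * ℓ) with hlam
  have hlam2 : lam ^ 2 = T * ℓ := Real.sq_sqrt (mul_nonneg hT0.le (by linarith))
  have hsT : Real.sqrt T ≤ lam := Real.sqrt_le_sqrt (by nlinarith)
  have hlampos : 0 < lam := lt_of_lt_of_le (Real.sqrt_pos.2 hT0) hsT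
  have hL : Real.log lam = (ℓ + Real.log ℓ) / 2 := by
    rw [hlam, Real.log_sqrt (mul_nonneg hT0.le (by linarith)),
      Real.log_mul hT0.ne' (by linarith)]
  have hLle : Real.log lam ≤ ℓ := by
    rw [hL]
    have := Real.log_le_sub_one_of_pos (show 0 < ℓ by linarith)
    linarith
  have hLge : ℓ / 2 ≤ Real.log lam := by rw [hL]; linarith
  have hLpos : 0 < Real.log lam := by linarith
  have hℓlam : ℓ ^ 2 ≤ δ / 2 * lam := h4.trans (by gcongr)
  have hV : T / lam = lam / ℓ := by
    rw [div_eq_div_iff hlampos.ne' (by linarith), ← hlam2]; ring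
  have hAℓ : A * Real.log lam ≤ ℓ ^ 2 := by
    calc A * Real.log lam ≤ A * ℓ := by gcongr
      _ ≤ ℓ ^ 2 := by nlinarith
  have hlamT : lam ≤ T := by
    rw [hlam, Real.sqrt_le_left hT0.le]
    have := Real.log_le_sub_one_of_pos hT0
    nlinarith
  have hδlam : 0 < δ * lam := mul_pos hd hlampos
  have hδT : δ * lam ≤ δ * T := mul_le_mul_of_nonneg_left hlamT hd.le
  have hℓ2 : 6400 * ℓ ≤ ℓ ^ 2 := by
    rw [sq]
    exact mul_le_mul_of_nonneg_right (by linarith) (by linarith)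
  have hℓlam' : ℓ ^ 2 ≤ lam := by
    have : δ / 2 * lam ≤ 1 * lam := mul_le_mul_of_nonneg_right (by linarith) hlampos.le
    linarith
  refine ⟨hd, hd1, hT0, ?_, ?_, ?_, ?_, ?_, ?_, ?_, ?_⟩
  · linarith
  · rw [hA']; linarith
  · linarith
  · linarith
  · rw [hlam2, show 2 * T * Real.log lam = T * (2 * Real.log lam) by ring]
    exact mul_le_mul_of_nonneg_left (by linarith) hT0.le
  · rw [hlam2, show (1 - δ / 16) * (2 * T * Real.log lam)
      = T * ((1 - δ / 16) * (2 * Real.log lam)) by ring]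
    refine mul_le_mul_of_nonneg_left ?_ hT0.le
    rw [hL]
    linarith [mul_nonneg hd.le hlℓ]
  · have h6 : 4 / 3 * A ≤ Real.log (Real.log lam) :=
      h2.trans (Real.log_le_log (by linarith) hLge)
    have h7 : T / lam ≤ lam / Real.log lam := by rw [hV]; gcongr
    have h8 : 1 ≤ lam / Real.log lam := by
      rw [one_le_div hLpos]
      linarith
    have h9 := Real.exp_one_lt_d9
    calc Real.exp 1 * (T / lam) + 1 ≤ 3 * (lam / Real.log lam) + lam / Real.log lam := by
          have h10 : Real.exp 1 * (T / lam) ≤ 3 * (T / lam) :=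
            mul_le_mul_of_nonneg_right (by linarith) (by positivity)
          linarith
      _ = 3 * lam * (4 / 3 * A) / (A * Real.log lam) := by
          field_simp
          norm_num
      _ ≤ _ := by gcongr
  · have h6 : 2 * ℓ ≤ δ * (T / lam) := by
      rw [hV, mul_div_assoc', le_div_iff₀ (by linarith)]
      linarith
    calc 2 * T + 1 ≤ δ ^ 2 / 128 * T ^ 2 := by
          have h7 : 3 * T ≤ δ ^ 2 / 128 * T ^ 2 := by
            have h8 : A * δ ^ 2 = 32 := by rw [hAdef]; field_simp
            have h9 : 12 * A * δ ^ 2 ≤ T * δ ^ 2 := mul_le_mul_of_nonneg_right h5 (sq_nonneg δ)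
            have h10 : 384 * T ≤ T * δ ^ 2 * T := mul_le_mul_of_nonneg_right (by linarith) hT0.le
            linarith
          linarith
      _ = δ ^ 2 / 128 * Real.exp (2 * ℓ) := by
          rw [two_mul, Real.exp_add, hℓ, Real.exp_log hT0, sq T]
      _ ≤ _ := by gcongr

/-- If for each `k` a property `P X k` holds for large `X`, then it holds for large `X` with some
`k = f X` that tends to infinity. -/
theorem exists_diagonal {P : ℝ → ℕ → Prop} (h : ∀ k, ∀ᶠ X in atTop, P X k) :
    ∃ f : ℝ → ℕ, Tendsto f atTop atTop ∧ ∀ᶠ X in atTop, P X (f X) := by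
  choose K hK using fun k => eventually_atTop.1 (h k)
  classical
  refine ⟨fun X => Nat.findGreatest (fun k => K k ≤ X) ⌊X⌋₊, tendsto_atTop.2 fun k => ?_, ?_⟩
  · filter_upwards [eventually_ge_atTop (K k), eventually_ge_atTop (k : ℝ)] with X h1 h2
    exact Nat.le_findGreatest (Nat.le_floor h2) h1
  · filter_upwards [eventually_ge_atTop (K 0)] with X h1
    exact hK _ _ (Nat.findGreatest_spec (P := fun k => K k ≤ X) (Nat.zero_le _) h1)

/-- **The resonance lemma.** For `X` large, `λ = √(log X · log log X)`, and `r` the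
multiplicative function supported on square-free integers with
`r(p) = λ/(√p · log p)` for primes `λ ≤ p ≤ exp((log λ)^2)` and `r(p) = 0`
otherwise, if `log N > 3λ log log λ` then
`(∑_{m,n ≤ N, a,b ≤ X, an = bm} r(a)r(b)) / (∑_{n ≤ X} r(n)^2)
  ≥ N · exp((2+o(1)) √(log X / log log X))`, the `o(1)` being as `X → ∞`. -/
theorem stmt_1 :
    ∃ ε : ℝ → ℝ, Tendsto ε atTop (nhds 0) ∧
      ∀ᶠ X : ℝ in atTop, ∀ lam : ℝ,
        lam = Real.sqrt (Real.log X * Real.log (Real.log X)) →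
        ∀ r : ℕ → ℝ, r 1 = 1 →
          (∀ m n : ℕ, Nat.Coprime m n → r (m * n) = r m * r n) →
          (∀ n : ℕ, ¬ Squarefree n → r n = 0) →
          (∀ p : ℕ, p.Prime →
            r p = if lam ≤ (p : ℝ) ∧ (p : ℝ) ≤ Real.exp ((Real.log lam) ^ 2)
              then lam / (Real.sqrt p * Real.log p) else 0) →
          ∀ N : ℝ, Real.log N > 3 * lam * Real.log (Real.log lam) →
            (∑ m ∈ Finset.Icc 1 ⌊N⌋₊, ∑ n ∈ Finset.Icc 1 ⌊N⌋₊,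
              ∑ a ∈ Finset.Icc 1 ⌊X⌋₊, ∑ b ∈ Finset.Icc 1 ⌊X⌋₊,
                if a * n = b * m then r a * r b else 0) /
              (∑ n ∈ Finset.Icc 1 ⌊X⌋₊, (r n) ^ 2) ≥
            N * Real.exp ((2 + ε X) *
              Real.sqrt (Real.log X / Real.log (Real.log X))) := by
  obtain ⟨f, hf, hP⟩ := exists_diagonal
    (P := fun X k => Regime (1 / ((k : ℝ) + 10)) (Real.log X)
      (Real.sqrt (Real.log X * Real.log (Real.log X)))) fun k =>
    Real.tendsto_log_atTop.eventually (eventually_regime (by positivity)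
      (one_div_le_one_div_of_le (by norm_num) (by linarith [Nat.cast_nonneg (α := ℝ) k])))
  refine ⟨fun X => -10 * (1 / ((f X : ℝ) + 10)), ?_, ?_⟩
  · have h1 : Tendsto (fun X => (f X : ℝ) + 10) atTop atTop :=
      tendsto_atTop_add_const_right _ _ (tendsto_natCast_atTop_atTop.comp hf)
    have h2 := (tendsto_inv_atTop_zero.comp h1).const_mul (-10)
    simpa [Function.comp_def, one_div] using h2
  · filter_upwards [hP, eventually_ge_atTop 1] with X hX hX1 lam hlam r h1 hmul hsq hrp N hN
    rw [← hlam] at hX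
    have hr : IsResonator r := isResonator_of_prime h1 hmul hsq fun p hp => by
      rw [hrp p hp]
      split_ifs
      · exact div_nonneg (by linarith [hX.lam_large])
          (mul_nonneg (Real.sqrt_nonneg _) (Real.log_natCast_nonneg _))
      · exact le_rfl
    have h := resNum_div_ge hX hX1 rfl hr hrp hN
    have hT := hX.T_pos
    have hl := hX.lam_large
    have hV : Real.sqrt (Real.log X / Real.log (Real.log X)) = Real.log X / lam := by
      have hsq2 : lam ^ 2 = Real.log X * Real.log (Real.log X) := by
        rw [hlam]
        refine Real.sq_sqrt (Real.sqrt_pos.1 ?_).le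
        rw [← hlam]
        linarith
      have hne : Real.log (Real.log X) ≠ 0 := by
        intro h0
        rw [h0, mul_zero] at hsq2
        nlinarith
      rw [Real.sqrt_eq_iff_mul_self_eq_of_pos (by positivity), div_mul_div_comm, ← sq lam, hsq2]
      field_simp
    rw [hV]
    refine ge_iff_le.2 (le_trans (le_of_eq ?_) h)
    ring_nf
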